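/- arXiv:2502.06520 — 2 statements merged into one kernel-verified Lean document; each statement's English description precedes it below -/
import Mathlib

section
/- Let Δ be a d-dimensional simplicial complex with a gradient vector field V, let (σ_0^{(k)}, τ_0^{(k−1)}) be a cancellable critical pair for some k ∈ {1,…,d}, and let W be the gradient vector field obtained by cancelling (σ_0, τ_0) from V. Let Crit_k^V(Δ) = {σ_0, σ_1, …, σ_n}, Crit_{k−1}^V(Δ) = {τ_0, τ_1, …, τ_m}, and suppose δ_k^V(τ_i) = Σ_{j=0}^n a_{ji} σ_j for all i ∈ {0,…,m}. Then for all i ∈ {1,…,m}, δ_k^W(τ_i) = Σ_{j=1}^n (a_{ji} − a_{00} a_{0i} a_{j0}) σ_j. -/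
open scoped Classical

/-- A finite abstract simplicial complex on a linearly ordered vertex type:
a finite nonempty collection of finite subsets closed under taking subsets. -/
structure SComplex (V : Type*) [LinearOrder V] where
  faces : Finset (Finset V)
  nonempty' : faces.Nonempty
  downClosed : ∀ σ ∈ faces, ∀ τ ⊆ σ, τ ∈ faces

variable {V : Type*} [LinearOrder V]

/-- `Vf` is a discrete vector field on `Δ`: a collection of pairs `(α, β)` of simplices
with `α ⊊ β`, `dim β = dim α + 1`, such that each simplex is in at most one pair. -/
def IsDVF (Δ : SComplex V) (Vf : Finset (Finset V × Finset V)) : Prop :=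
  (∀ p ∈ Vf, p.1 ∈ Δ.faces ∧ p.2 ∈ Δ.faces ∧ p.1 ⊂ p.2 ∧ p.2.card = p.1.card + 1) ∧
    ∀ p ∈ Vf, ∀ q ∈ Vf, p ≠ q → p.1 ≠ q.1 ∧ p.1 ≠ q.2 ∧ p.2 ≠ q.1 ∧ p.2 ≠ q.2

/-- The incidence number `⟨σ, τ⟩`: it is `(-1)^i` if `τ = σ \ {x_i}` where
`x_0 < x_1 < …` are the vertices of `σ`, and `0` otherwise. -/
noncomputable def incidence (σ τ : Finset V) : ℤ :=
  if τ ⊆ σ ∧ (σ \ τ).card = 1 then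
    (-1) ^ (σ.filter fun y => ∃ x ∈ σ \ τ, y < x).card
  else 0

/-- A `Vf`-trajectory `β₀, α₁, β₁, …, α_r, β_r` from the `q`-simplex `s` to the
`q`-simplex `t`.  Here the field `α i` denotes `α_{i+1}` and `β i` denotes `β_i`
of the usual description. -/
structure Traj (Δ : SComplex V) (Vf : Finset (Finset V × Finset V)) (q : ℕ)
    (s t : Finset V) where
  r : ℕ
  β : Fin (r + 1) → Finset V
  α : Fin r → Finset V
  βmem : ∀ i, β i ∈ Δ.faces
  αmem : ∀ i, α i ∈ Δ.faces
  βcard : ∀ i, (β i).card = q + 1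
  αcard : ∀ i, (α i).card = q
  first : β 0 = s
  last : β (Fin.last r) = t
  sub : ∀ i : Fin r, α i ⊂ β i.castSucc
  vpair : ∀ i : Fin r, (α i, β i.succ) ∈ Vf
  αne : ∀ i : Fin r, ∀ h : (i : ℕ) + 1 < r, α ⟨(i : ℕ) + 1, h⟩ ≠ α i
  βne : ∀ i : Fin r, β i.succ ≠ β i.castSucc

/-- A `Vf`-trajectory `β₀, α₁, β₁, …, α_r, β_r, α_{r+1}` from the `q`-simplex `s`
to the `(q-1)`-simplex `t`.  Here `α i` denotes `α_{i+1}` and `β i` denotes `β_i`. -/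
structure TrajD (Δ : SComplex V) (Vf : Finset (Finset V × Finset V)) (q : ℕ)
    (s t : Finset V) where
  r : ℕ
  β : Fin (r + 1) → Finset V
  α : Fin (r + 1) → Finset V
  βmem : ∀ i, β i ∈ Δ.faces
  αmem : ∀ i, α i ∈ Δ.faces
  βcard : ∀ i, (β i).card = q + 1
  αcard : ∀ i, (α i).card = q
  first : β 0 = s
  last : α (Fin.last r) = t
  sub : ∀ i : Fin (r + 1), α i ⊂ β i
  vpair : ∀ i : Fin r, (α i.castSucc, β i.succ) ∈ Vf
  αne : ∀ i : Fin r, α i.succ ≠ α i.castSucc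
  βne : ∀ i : Fin r, β i.succ ≠ β i.castSucc

/-- A co-`Vf`-trajectory `β₀, τ₁, β₁, …, τ_r, β_r` from the `q`-simplex `s` to the
`q`-simplex `t`.  Here `γ i` denotes `τ_{i+1}` and `β i` denotes `β_i`. -/
structure CoTraj (Δ : SComplex V) (Vf : Finset (Finset V × Finset V)) (q : ℕ)
    (s t : Finset V) where
  r : ℕ
  β : Fin (r + 1) → Finset V
  γ : Fin r → Finset V
  βmem : ∀ i, β i ∈ Δ.faces
  γmem : ∀ i, γ i ∈ Δ.faces
  βcard : ∀ i, (β i).card = q + 1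
  γcard : ∀ i, (γ i).card = q + 2
  first : β 0 = s
  last : β (Fin.last r) = t
  sub : ∀ i : Fin r, β i.castSucc ⊂ γ i
  vpair : ∀ i : Fin r, (β i.succ, γ i) ∈ Vf
  βne : ∀ i : Fin r, β i.castSucc ≠ β i.succ

/-- A co-`Vf`-trajectory `β₀, τ₁, β₁, …, τ_r, β_r, τ_{r+1}` from the `(q-1)`-simplex `s`
to the `q`-simplex `t`.  Here `γ i` denotes `τ_{i+1}` and `β i` denotes `β_i`. -/
structure CoTrajU (Δ : SComplex V) (Vf : Finset (Finset V × Finset V)) (q : ℕ)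
    (s t : Finset V) where
  r : ℕ
  β : Fin (r + 1) → Finset V
  γ : Fin (r + 1) → Finset V
  βmem : ∀ i, β i ∈ Δ.faces
  γmem : ∀ i, γ i ∈ Δ.faces
  βcard : ∀ i, (β i).card = q
  γcard : ∀ i, (γ i).card = q + 1
  first : β 0 = s
  last : γ (Fin.last r) = t
  sub : ∀ i : Fin (r + 1), β i ⊂ γ i
  vpair : ∀ i : Fin r, (β i.succ, γ i.castSucc) ∈ Vf
  βne : ∀ i : Fin r, β i.castSucc ≠ β i.succ
  γne : ∀ i : Fin r, γ i.succ ≠ γ i.castSucc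

/-- The weight `w(P) = ∏ (-⟨β_{i-1}, α_i⟩⟨β_i, α_i⟩)` of a trajectory between
`q`-simplices. -/
noncomputable def wT {Δ : SComplex V} {Vf : Finset (Finset V × Finset V)} {q : ℕ}
    {s t : Finset V} (P : Traj Δ Vf q s t) : ℤ :=
  ∏ i : Fin P.r, -(incidence (P.β i.castSucc) (P.α i) * incidence (P.β i.succ) (P.α i))

/-- The weight `w(P) = (∏ (-⟨β_{i-1}, α_i⟩⟨β_i, α_i⟩)) ⬝ ⟨β_r, α_{r+1}⟩` of a trajectory
from a `q`-simplex to a `(q-1)`-simplex. -/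
noncomputable def wTD {Δ : SComplex V} {Vf : Finset (Finset V × Finset V)} {q : ℕ}
    {s t : Finset V} (P : TrajD Δ Vf q s t) : ℤ :=
  (∏ i : Fin P.r,
      -(incidence (P.β i.castSucc) (P.α i.castSucc) *
        incidence (P.β i.succ) (P.α i.castSucc))) *
    incidence (P.β (Fin.last P.r)) (P.α (Fin.last P.r))

/-- The weight `w(Q) = ∏ (-⟨τ_i, β_{i-1}⟩⟨τ_i, β_i⟩)` of a co-trajectory between
`q`-simplices. -/
noncomputable def wCT {Δ : SComplex V} {Vf : Finset (Finset V × Finset V)} {q : ℕ}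
    {s t : Finset V} (Q : CoTraj Δ Vf q s t) : ℤ :=
  ∏ i : Fin Q.r, -(incidence (Q.γ i) (Q.β i.castSucc) * incidence (Q.γ i) (Q.β i.succ))

/-- The weight `w(Q) = (∏ (-⟨τ_i, β_{i-1}⟩⟨τ_i, β_i⟩)) ⬝ ⟨τ_{r+1}, β_r⟩` of a co-trajectory
from a `(q-1)`-simplex to a `q`-simplex. -/
noncomputable def wCTU {Δ : SComplex V} {Vf : Finset (Finset V × Finset V)} {q : ℕ}
    {s t : Finset V} (Q : CoTrajU Δ Vf q s t) : ℤ :=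
  (∏ i : Fin Q.r,
      -(incidence (Q.γ i.castSucc) (Q.β i.castSucc) *
        incidence (Q.γ i.castSucc) (Q.β i.succ))) *
    incidence (Q.γ (Fin.last Q.r)) (Q.β (Fin.last Q.r))

/-- A gradient vector field: a discrete vector field admitting no nontrivial closed
trajectory. -/
def IsGVF (Δ : SComplex V) (Vf : Finset (Finset V × Finset V)) : Prop :=
  IsDVF Δ Vf ∧ ¬ ∃ (q : ℕ) (s : Finset V) (P : Traj Δ Vf q s s), 0 < P.r

/-- `σ` is a critical simplex of `Δ` with respect to `Vf`: a nonempty simplex that either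
belongs to no pair of `Vf`, or is a `0`-simplex paired with the empty simplex. -/
def IsCrit (Δ : SComplex V) (Vf : Finset (Finset V × Finset V)) (σ : Finset V) : Prop :=
  σ ∈ Δ.faces ∧ σ.Nonempty ∧
    ((∀ p ∈ Vf, σ ≠ p.1 ∧ σ ≠ p.2) ∨ (σ.card = 1 ∧ (∅, σ) ∈ Vf))

/-- The set of critical simplices of cardinality `c` (i.e. of dimension `c - 1`);
so `Crit_q = critC Δ Vf (q + 1)`. -/
noncomputable def critC (Δ : SComplex V) (Vf : Finset (Finset V × Finset V)) (c : ℕ) :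
    Finset (Finset V) :=
  Δ.faces.filter fun σ => σ.card = c ∧ IsCrit Δ Vf σ

/-- The coefficient of the `(q-1)`-simplex `τ` in `∂_q σ`: the sum of the weights of all
trajectories from `σ` to `τ`. -/
noncomputable def bCoeff (Δ : SComplex V) (Vf : Finset (Finset V × Finset V)) (q : ℕ)
    (σ τ : Finset V) : ℤ :=
  ∑ᶠ P : TrajD Δ Vf q σ τ, wTD P

/-- The `q`-th Morse boundary operator `∂_q`, as an endomorphism of the free abelian group
on all simplices; it sends a critical `q`-simplex `σ` to
`∑_{τ ∈ Crit_{q-1}} (∑_{P : σ ⇝ τ} w(P)) ⬝ τ` and non-critical generators to `0`. -/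
noncomputable def morseBoundary (Δ : SComplex V) (Vf : Finset (Finset V × Finset V))
    (q : ℕ) : (Finset V →₀ ℤ) →ₗ[ℤ] (Finset V →₀ ℤ) :=
  Finsupp.lsum ℤ fun σ => LinearMap.toSpanSingleton ℤ (Finset V →₀ ℤ)
    (if σ ∈ critC Δ Vf (q + 1) then
      ∑ τ ∈ critC Δ Vf q, bCoeff Δ Vf q σ τ • Finsupp.single τ (1 : ℤ)
    else 0)

/-- The coefficient of the `q`-simplex `τ` in `δ_q σ`: the sum of the weights of all
co-trajectories from `σ` to `τ`. -/
noncomputable def cbCoeff (Δ : SComplex V) (Vf : Finset (Finset V × Finset V)) (q : ℕ)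
    (σ τ : Finset V) : ℤ :=
  ∑ᶠ Q : CoTrajU Δ Vf q σ τ, wCTU Q

/-- The `q`-th Morse coboundary operator `δ_q`, as an endomorphism of the free abelian
group on all simplices; it sends a critical `(q-1)`-simplex `σ` to
`∑_{τ ∈ Crit_q} (∑_{Q : σ ⇝ τ} w(Q)) ⬝ τ` and non-critical generators to `0`. -/
noncomputable def morseCoboundary (Δ : SComplex V) (Vf : Finset (Finset V × Finset V))
    (q : ℕ) : (Finset V →₀ ℤ) →ₗ[ℤ] (Finset V →₀ ℤ) :=
  Finsupp.lsum ℤ fun σ => LinearMap.toSpanSingleton ℤ (Finset V →₀ ℤ)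
    (if σ ∈ critC Δ Vf q then
      ∑ τ ∈ critC Δ Vf (q + 1), cbCoeff Δ Vf q σ τ • Finsupp.single τ (1 : ℤ)
    else 0)

/-- The vector field `W = (V \ {(α_i, β_i) : 1 ≤ i ≤ r}) ∪ {(α_{i+1}, β_i) : 0 ≤ i ≤ r}`
obtained by cancelling a pair of critical simplices along the trajectory `P0`. -/
noncomputable def cancelPair {Δ : SComplex V} {Vf : Finset (Finset V × Finset V)} {k : ℕ}
    {σ0 τ0 : Finset V} (P0 : TrajD Δ Vf k σ0 τ0) : Finset (Finset V × Finset V) :=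
  (Vf \ Finset.image (fun i : Fin P0.r => (P0.α i.castSucc, P0.β i.succ)) Finset.univ) ∪
    Finset.image (fun i : Fin (P0.r + 1) => (P0.α i, P0.β i)) Finset.univ

/-- The set of simplices appearing in a trajectory. -/
noncomputable def TrajD.simps {Δ : SComplex V} {Vf : Finset (Finset V × Finset V)} {q : ℕ}
    {s t : Finset V} (P : TrajD Δ Vf q s t) : Finset (Finset V) :=
  Finset.image P.β Finset.univ ∪ Finset.image P.α Finset.univ

/-- The set of simplices appearing in a trajectory. -/
noncomputable def Traj.simps {Δ : SComplex V} {Vf : Finset (Finset V × Finset V)} {q : ℕ}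
    {s t : Finset V} (P : Traj Δ Vf q s t) : Finset (Finset V) :=
  Finset.image P.β Finset.univ ∪ Finset.image P.α Finset.univ

/-- The underlying sequence `β₀, α₁, β₁, …, α_r, β_r, α_{r+1}` of a trajectory. -/
noncomputable def TrajD.seq {Δ : SComplex V} {Vf : Finset (Finset V × Finset V)} {q : ℕ}
    {s t : Finset V} (P : TrajD Δ Vf q s t) : List (Finset V) :=
  (List.ofFn fun i : Fin (P.r + 1) => [P.β i, P.α i]).flatten

/-- The underlying sequence `β₀, α₁, β₁, …, α_r, β_r` of a trajectory. -/
noncomputable def Traj.seq {Δ : SComplex V} {Vf : Finset (Finset V × Finset V)} {q : ℕ}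
    {s t : Finset V} (P : Traj Δ Vf q s t) : List (Finset V) :=
  ((List.ofFn fun i : Fin P.r => [P.β i.castSucc, P.α i]).flatten) ++ [P.β (Fin.last P.r)]

/-- The underlying sequence `β₀, τ₁, β₁, …, β_r, τ_{r+1}` of a co-trajectory. -/
noncomputable def CoTrajU.seq {Δ : SComplex V} {Vf : Finset (Finset V × Finset V)} {q : ℕ}
    {s t : Finset V} (Q : CoTrajU Δ Vf q s t) : List (Finset V) :=
  (List.ofFn fun i : Fin (Q.r + 1) => [Q.β i, Q.γ i]).flatten


namespace MorseCancellation

/-- A pair of simplices of `Δ` of cardinalities `k` and `k + 1`, the first a facet of the second. -/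
def IsFlag (Δ : SComplex V) (k : ℕ) (p : Finset V × Finset V) : Prop :=
  p.1 ∈ Δ.faces ∧ p.2 ∈ Δ.faces ∧ p.1.card = k ∧ p.2.card = k + 1 ∧ p.1 ⊂ p.2

/-- The pairs of a vector field joining simplices of cardinalities `k` and `k + 1`. -/
noncomputable def levelPairs (Δ : SComplex V) (Vf : Finset (Finset V × Finset V)) (k : ℕ) :
    Finset (Finset V × Finset V) :=
  Vf.filter (IsFlag Δ k)

/-- `M` is a partial matching, acyclic as witnessed by the rank function `ρ`. -/
structure IsRankedMatching (M : Finset (Finset V × Finset V)) (ρ : Finset V → ℕ) : Prop where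
  fst_inj : ∀ p ∈ M, ∀ q ∈ M, p.1 = q.1 → p = q
  snd_inj : ∀ p ∈ M, ∀ q ∈ M, p.2 = q.2 → p = q
  rank_lt : ∀ p ∈ M, ∀ q ∈ M, q.1 ⊂ p.2 → p ≠ q → ρ q.2 < ρ p.2

lemma incidence_mul_self {x z : Finset V} (hxz : x ⊂ z) (hc : z.card = x.card + 1) :
    incidence z x * incidence z x = 1 := by
  have h : (z \ x).card = 1 := by
    rw [Finset.card_sdiff_of_subset hxz.1]; omega
  rw [incidence, if_pos ⟨hxz.1, h⟩, ← pow_add, ← two_mul, pow_mul]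
  simp

lemma IsFlag.incidence_mul_self {Δ : SComplex V} {k : ℕ} {p : Finset V × Finset V}
    (hp : IsFlag Δ k p) : incidence p.2 p.1 * incidence p.2 p.1 = 1 :=
  MorseCancellation.incidence_mul_self hp.2.2.2.2 (by rw [hp.2.2.2.1, hp.2.2.1])

lemma incidence_eq_zero {x z : Finset V} (hxz : ¬ x ⊂ z) : incidence z x = 0 := by
  rw [incidence, if_neg]
  rintro ⟨h, hc⟩
  apply hxz
  refine h.ssubset_of_ne ?_
  rintro rfl
  simp at hc

/-- Consecutive flags of a co-trajectory. -/
def IsStep (Vf : Finset (Finset V × Finset V)) (p q : Finset V × Finset V) : Prop :=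
  (q.1, p.2) ∈ Vf ∧ p.1 ≠ q.1 ∧ q.2 ≠ p.2

/-- Lists of flags underlying co-trajectories from `x` to `y`. -/
def IsCoPath (Δ : SComplex V) (Vf : Finset (Finset V × Finset V)) (k : ℕ) (x y : Finset V)
    (l : List (Finset V × Finset V)) : Prop :=
  l.head?.map Prod.fst = some x ∧ l.getLast?.map Prod.snd = some y ∧ (∀ p ∈ l, IsFlag Δ k p) ∧
    l.IsChain (IsStep Vf)

/-- The list of flags underlying a co-trajectory. -/
def flags {Δ : SComplex V} {Vf : Finset (Finset V × Finset V)} {k : ℕ} {x y : Finset V}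
    (Q : CoTrajU Δ Vf k x y) : List (Finset V × Finset V) :=
  List.ofFn fun i => (Q.β i, Q.γ i)

/-- The weight of a list of flags. -/
noncomputable def flagsWeight : List (Finset V × Finset V) → ℤ
  | [] => 1
  | [p] => incidence p.2 p.1
  | p :: q :: l => -(incidence p.2 p.1 * incidence p.2 q.1) * flagsWeight (q :: l)

lemma flags_injective {Δ : SComplex V} {Vf : Finset (Finset V × Finset V)} {k : ℕ}
    {x y : Finset V} :
    Function.Injective (flags : CoTrajU Δ Vf k x y → List (Finset V × Finset V)) := by
  rintro ⟨r, β, γ, _, _, _, _, _, _, _, _, _, _⟩ ⟨r', β', γ', _, _, _, _, _, _, _, _, _, _⟩ h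
  have hr : r = r' := by simpa [flags] using congrArg List.length h
  subst hr
  have h' := List.ofFn_injective h
  have hβ : β = β' := funext fun i => congrArg Prod.fst (congrFun h' i)
  have hγ : γ = γ' := funext fun i => congrArg Prod.snd (congrFun h' i)
  subst hβ hγ
  rfl

lemma flagsWeight_ofFn (r : ℕ) (β γ : Fin (r + 1) → Finset V) :
    flagsWeight (List.ofFn fun i => (β i, γ i)) =
      (∏ i : Fin r, -(incidence (γ i.castSucc) (β i.castSucc) *
        incidence (γ i.castSucc) (β i.succ))) *
      incidence (γ (Fin.last r)) (β (Fin.last r)) := by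
  induction r with
  | zero => simp [flagsWeight]
  | succ r ih =>
    have := ih (fun i => β i.succ) (fun i => γ i.succ)
    rw [List.ofFn_succ] at this
    rw [List.ofFn_succ, List.ofFn_succ, flagsWeight, this, Fin.prod_univ_succ]
    simp [mul_assoc]

lemma range_flags {Δ : SComplex V} {Vf : Finset (Finset V × Finset V)} {k : ℕ}
    {x y : Finset V} :
    Set.range (flags : CoTrajU Δ Vf k x y → List (Finset V × Finset V)) =
      {l | IsCoPath Δ Vf k x y l} := by
  ext l
  constructor
  · rintro ⟨Q, rfl⟩
    refine ⟨?_, ?_, ?_, ?_⟩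
    · simp [flags, List.ofFn_succ, Q.first]
    · rw [flags, List.ofFn_succ', List.concat_eq_append, List.getLast?_append]
      simp [Q.last]
    · intro p hp
      obtain ⟨i, rfl⟩ := List.mem_ofFn.1 hp
      exact ⟨Q.βmem i, Q.γmem i, Q.βcard i, Q.γcard i, Q.sub i⟩
    · rw [List.isChain_iff_getElem]
      intro i hi
      simp only [flags, List.length_ofFn] at hi
      have hi' : i < Q.r := by omega
      simp only [flags, List.getElem_ofFn]
      exact ⟨Q.vpair ⟨i, hi'⟩, Q.βne ⟨i, hi'⟩, Q.γne ⟨i, hi'⟩⟩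
  · rintro ⟨h1, h2, h3, h4⟩
    obtain ⟨r, f, rfl⟩ : ∃ (r : ℕ) (f : Fin (r + 1) → Finset V × Finset V), l = List.ofFn f := by
      cases l with
      | nil => simp at h1
      | cons a l => exact ⟨l.length, (a :: l).get, (List.ofFn_get _).symm⟩
    have hf (i : Fin (r + 1)) : IsFlag Δ k (f i) := h3 _ (List.mem_ofFn.2 ⟨i, rfl⟩)
    have hs (i : Fin r) : IsStep Vf (f i.castSucc) (f i.succ) := by
      have := List.isChain_iff_getElem.1 h4 i (by simp)
      simp only [List.getElem_ofFn] at this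
      exact this
    refine ⟨⟨r, fun i => (f i).1, fun i => (f i).2, fun i => (hf i).1, fun i => (hf i).2.1,
      fun i => (hf i).2.2.1, fun i => (hf i).2.2.2.1, ?_, ?_, fun i => (hf i).2.2.2.2,
      fun i => (hs i).1, fun i => (hs i).2.1, fun i => (hs i).2.2⟩, rfl⟩
    · simpa [List.ofFn_succ] using h1
    · rw [List.ofFn_succ', List.concat_eq_append, List.getLast?_append] at h2
      simpa using h2

lemma cbCoeff_eq_finsum_flagsWeight (Δ : SComplex V) (Vf : Finset (Finset V × Finset V)) (k : ℕ)
    (x y : Finset V) :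
    cbCoeff Δ Vf k x y = ∑ᶠ l ∈ {l | IsCoPath Δ Vf k x y l}, flagsWeight l := by
  rw [← range_flags, finsum_mem_range flags_injective, cbCoeff]
  exact finsum_congr fun Q => (flagsWeight_ofFn Q.r Q.β Q.γ).symm

/-- Decomposition of the co-trajectories from `x` to `y` by their first step. -/
lemma setOf_isCoPath_eq {Δ : SComplex V} {Vf : Finset (Finset V × Finset V)} {k : ℕ}
    {ρ : Finset V → ℕ} (hsub : ∀ p ∈ Vf, p.1 ⊂ p.2)
    (hM : IsRankedMatching (levelPairs Δ Vf k) ρ) {x y : Finset V}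
    (hx : x ∈ Δ.faces) (hxc : x.card = k) (hy : y ∈ Δ.faces) (hyc : y.card = k + 1)
    (hyM : ∀ p ∈ levelPairs Δ Vf k, p.2 ≠ y) :
    {l | IsCoPath Δ Vf k x y l} =
      {l | x ⊂ y ∧ l = [(x, y)]} ∪
      ⋃ p ∈ (levelPairs Δ Vf k).filter (fun p => x ⊂ p.2 ∧ p.1 ≠ x),
        (fun l => (x, p.2) :: l) '' {l | IsCoPath Δ Vf k p.1 y l} := by
  ext l
  simp only [Set.mem_union, Set.mem_ofPred_eq, Set.mem_iUnion, Set.mem_image, Finset.mem_filter,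
    exists_prop]
  constructor
  · rintro ⟨h1, h2, h3, h4⟩
    match l with
    | [] => simp at h1
    | [p] =>
      have hp : p = (x, y) := Prod.ext (by simpa using h1) (by simpa using h2)
      subst hp
      exact Or.inl ⟨(h3 (x, y) (by simp)).2.2.2.2, rfl⟩
    | p :: q :: l =>
      right
      have hpx : p.1 = x := by simpa using h1
      rw [List.isChain_cons_cons] at h4
      have hp := h3 p (by simp)
      have hq := h3 q (by simp)
      refine ⟨(q.1, p.2), ⟨?_, hpx ▸ hp.2.2.2.2, hpx ▸ h4.1.2.1.symm⟩, q :: l,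
        ⟨by simp, ?_, ?_, h4.2⟩, ?_⟩
      · exact Finset.mem_filter.2 ⟨h4.1.1, hq.1, hp.2.1, hq.2.2.1, hp.2.2.2.1, hsub _ h4.1.1⟩
      · simpa using h2
      · exact fun p hp => h3 p (List.mem_cons_of_mem _ hp)
      · simp [← hpx]
  · rintro (⟨hxy, rfl⟩ | ⟨p, ⟨hpM, hxp, hpx⟩, l, ⟨h1, h2, h3, h4⟩, rfl⟩)
    · exact ⟨by simp, by simp, by simpa using ⟨hx, hy, hxc, hyc, hxy⟩, by simp⟩
    · have hp := (Finset.mem_filter.1 hpM).2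
      match l with
      | [] => simp at h1
      | q :: l =>
        have hqp : q.1 = p.1 := by simpa using h1
        refine ⟨by simp, by simpa using h2, ?_, ?_⟩
        · intro f hf
          rcases List.mem_cons.1 hf with rfl | hf
          · exact ⟨hx, hp.2.1, hxc, hp.2.2.2.1, hxp⟩
          · exact h3 f hf
        · rw [List.isChain_cons_cons]
          refine ⟨⟨?_, ?_, ?_⟩, h4⟩
          · simpa [hqp] using (Finset.mem_filter.1 hpM).1
          · simpa [hqp] using hpx.symm
          · simp only
            intro hqe
            match l with
            | [] =>
              exact hyM p hpM (by rw [← hqe]; simpa using h2)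
            | q' :: l =>
              rw [List.isChain_cons_cons] at h4
              have hq := h3 q (by simp)
              have hq' := h3 q' (by simp)
              have := hM.snd_inj p hpM (q'.1, q.2)
                (Finset.mem_filter.2 ⟨h4.1.1, hq'.1, hq.2.1, hq'.2.2.1, hq.2.2.2.1,
                  hsub _ h4.1.1⟩) hqe.symm
              exact h4.1.2.1 (by rw [hqp, this])

lemma finite_setOf_isCoPath {Δ : SComplex V} {Vf : Finset (Finset V × Finset V)} {k : ℕ}
    {ρ : Finset V → ℕ} (hsub : ∀ p ∈ Vf, p.1 ⊂ p.2)
    (hM : IsRankedMatching (levelPairs Δ Vf k) ρ) {x y : Finset V}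
    (hx : x ∈ Δ.faces) (hxc : x.card = k) (hy : y ∈ Δ.faces) (hyc : y.card = k + 1)
    (hyM : ∀ p ∈ levelPairs Δ Vf k, p.2 ≠ y) :
    {l | IsCoPath Δ Vf k x y l}.Finite := by
  have base (x : Finset V) : {l : List (Finset V × Finset V) | x ⊂ y ∧ l = [(x, y)]}.Finite :=
    (Set.finite_singleton [(x, y)]).subset fun l hl => hl.2
  have key : ∀ N, ∀ p ∈ levelPairs Δ Vf k, (levelPairs Δ Vf k).sup (fun p => ρ p.2) - ρ p.2 ≤ N →
      {l | IsCoPath Δ Vf k p.1 y l}.Finite := by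
    intro N
    induction N using Nat.strong_induction_on with
    | _ N ih =>
      intro p hp hN
      have hpf := (Finset.mem_filter.1 hp).2
      rw [setOf_isCoPath_eq hsub hM hpf.1 hpf.2.2.1 hy hyc hyM]
      refine (base _).union (Set.Finite.biUnion (Finset.finite_toSet _) fun q hq => ?_)
      obtain ⟨hqM, hpq, hqp⟩ := Finset.mem_filter.1 hq
      have hlt := hM.rank_lt q hqM p hp hpq (fun h => hqp (by rw [h]))
      have hle := Finset.le_sup (f := fun p : Finset V × Finset V => ρ p.2) hqM
      exact (ih ((levelPairs Δ Vf k).sup (fun p => ρ p.2) - ρ q.2) (by omega) q hqM le_rfl).image _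
  rw [setOf_isCoPath_eq hsub hM hx hxc hy hyc hyM]
  refine (base _).union (Set.Finite.biUnion (Finset.finite_toSet _) fun q hq => ?_)
  exact (key _ q (Finset.mem_filter.1 hq).1 le_rfl).image _

/-- First-step recurrence for the sums of weights of co-trajectories. -/
lemma cbCoeff_eq_add_sum {Δ : SComplex V} {Vf : Finset (Finset V × Finset V)} {k : ℕ}
    {ρ : Finset V → ℕ} (hsub : ∀ p ∈ Vf, p.1 ⊂ p.2)
    (hM : IsRankedMatching (levelPairs Δ Vf k) ρ) {x y : Finset V}
    (hx : x ∈ Δ.faces) (hxc : x.card = k) (hy : y ∈ Δ.faces) (hyc : y.card = k + 1)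
    (hyM : ∀ p ∈ levelPairs Δ Vf k, p.2 ≠ y) :
    cbCoeff Δ Vf k x y = incidence y x + ∑ p ∈ levelPairs Δ Vf k,
      if p.1 = x then 0 else
        -(incidence p.2 x * incidence p.2 p.1) * cbCoeff Δ Vf k p.1 y := by
  have hfin (p) (hp : p ∈ levelPairs Δ Vf k) : {l | IsCoPath Δ Vf k p.1 y l}.Finite :=
    have hpf := (Finset.mem_filter.1 hp).2
    finite_setOf_isCoPath hsub hM hpf.1 hpf.2.2.1 hy hyc hyM
  rw [cbCoeff_eq_finsum_flagsWeight, setOf_isCoPath_eq hsub hM hx hxc hy hyc hyM,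
    finsum_mem_union]
  · congr 1
    · by_cases hxy : x ⊂ y
      · simp [hxy, flagsWeight]
      · simp [hxy, incidence_eq_zero]
    · have := finsum_mem_biUnion (f := flagsWeight) (I := (((levelPairs Δ Vf k).filter
        (fun p => x ⊂ p.2 ∧ p.1 ≠ x) : Finset _) : Set (Finset V × Finset V)))
        (t := fun p => (fun l => (x, p.2) :: l) '' {l | IsCoPath Δ Vf k p.1 y l}) ?_
        (Finset.finite_toSet _) ?_
      · simp only [Finset.mem_coe] at this
        rw [this, finsum_mem_finset_eq_sum, Finset.sum_filter]
        refine Finset.sum_congr rfl fun p hp => ?_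
        by_cases hpx : p.1 = x
        · simp [hpx]
        by_cases hxp : x ⊂ p.2
        · rw [if_pos ⟨hxp, hpx⟩, if_neg hpx, finsum_mem_image (by intro a _ b _ h; simpa using h),
            cbCoeff_eq_finsum_flagsWeight, mul_finsum_mem]
          refine finsum_mem_congr rfl fun l hl => ?_
          obtain ⟨h1, -⟩ := hl
          match l with
          | [] => simp at h1
          | q :: l =>
            have hq : q.1 = p.1 := by simpa using h1
            simp [flagsWeight, hq]
        · rw [if_neg (fun h => hxp h.1), if_neg hpx, incidence_eq_zero hxp]
          simp
      · intro p hp q hq hpq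
        rw [Function.onFun, Set.disjoint_left]
        rintro _ ⟨l, _, rfl⟩ ⟨l', _, h⟩
        simp only [List.cons.injEq, Prod.mk.injEq, true_and] at h
        exact hpq (hM.snd_inj p (Finset.mem_filter.1 hp).1 q (Finset.mem_filter.1 hq).1 h.1.symm)
      · exact fun p hp => (hfin p (Finset.mem_filter.1 hp).1).image _
  · rw [Set.disjoint_left]
    rintro l ⟨-, rfl⟩ hl
    simp only [Set.mem_iUnion, Set.mem_image, exists_prop] at hl
    obtain ⟨p, hp, l, hl, h⟩ := hl
    simp only [List.cons.injEq, Prod.mk.injEq, true_and] at h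
    exact hyM p (Finset.mem_filter.1 hp).1 h.1
  · exact (Set.finite_singleton [(x, y)]).subset fun l hl => hl.2
  · exact Set.Finite.biUnion (Finset.finite_toSet _) fun p hp =>
      (hfin p (Finset.mem_filter.1 hp).1).image _

/-- The coefficient at `x` of the simplicial boundary of the chain `g` of simplices of
cardinality `k + 1`. -/
noncomputable def boundaryAt (Δ : SComplex V) (k : ℕ) (g : Finset V → ℤ) (x : Finset V) : ℤ :=
  ∑ z ∈ Δ.faces.filter (fun z => z.card = k + 1), incidence z x * g z

/-- A critical simplex `y` extends to a chain, supported on `y` and the matched simplices, whose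
boundary vanishes on the matched simplices and is given by the Morse coefficients elsewhere. -/
lemma exists_chain_boundaryAt {Δ : SComplex V} {Vf : Finset (Finset V × Finset V)} {k : ℕ}
    {ρ : Finset V → ℕ} (hsub : ∀ p ∈ Vf, p.1 ⊂ p.2)
    (hM : IsRankedMatching (levelPairs Δ Vf k) ρ) {y : Finset V}
    (hy : y ∈ Δ.faces) (hyc : y.card = k + 1)
    (hyM : ∀ p ∈ levelPairs Δ Vf k, p.2 ≠ y) :
    ∃ g : Finset V → ℤ, g y = 1 ∧
      (∀ z, z ≠ y → (∀ p ∈ levelPairs Δ Vf k, p.2 ≠ z) → g z = 0) ∧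
      (∀ p ∈ levelPairs Δ Vf k, boundaryAt Δ k g p.1 = 0) ∧
      ∀ x ∈ Δ.faces, x.card = k → (∀ p ∈ levelPairs Δ Vf k, p.1 ≠ x) →
        boundaryAt Δ k g x = cbCoeff Δ Vf k x y := by
  set M := levelPairs Δ Vf k with hMdef
  let t (p : Finset V × Finset V) : ℤ := -(incidence p.2 p.1 * cbCoeff Δ Vf k p.1 y)
  let g (z : Finset V) : ℤ := (if z = y then 1 else 0) + ∑ p ∈ M.filter (fun p => p.2 = z), t p
  have hg (x : Finset V) : boundaryAt Δ k g x =
      incidence y x + ∑ p ∈ M, incidence p.2 x * t p := by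
    simp only [boundaryAt, g, mul_add, Finset.sum_add_distrib]
    congr 1
    · simp [hy, hyc]
    · rw [← Finset.sum_fiberwise_of_maps_to (s := M) (g := Prod.snd)
        (t := Δ.faces.filter (fun z => z.card = k + 1))]
      · refine Finset.sum_congr rfl fun z _ => ?_
        rw [Finset.mul_sum]
        refine Finset.sum_congr rfl fun p hp => ?_
        rw [(Finset.mem_filter.1 hp).2]
      · intro p hp
        have := (Finset.mem_filter.1 hp).2
        exact Finset.mem_filter.2 ⟨this.2.1, this.2.2.2.1⟩
  refine ⟨g, ?_, ?_, ?_, ?_⟩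
  · simp only [g, if_true]
    rw [Finset.filter_false_of_mem hyM]
    simp
  · intro z hzy hz
    simp only [g, if_neg hzy]
    rw [Finset.filter_false_of_mem hz]
    simp
  · intro p hp
    have hpf := (Finset.mem_filter.1 hp).2
    have hrec := cbCoeff_eq_add_sum hsub hM hpf.1 hpf.2.2.1 hy hyc hyM
    rw [← hMdef, ← Finset.add_sum_erase _ _ hp, if_pos rfl, zero_add] at hrec
    rw [hg, ← Finset.add_sum_erase _ _ hp]
    have h1 : incidence p.2 p.1 * t p = - cbCoeff Δ Vf k p.1 y := by
      simp only [t]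
      linear_combination (-cbCoeff Δ Vf k p.1 y) * hpf.incidence_mul_self
    have h2 : ∑ q ∈ M.erase p, incidence q.2 p.1 * t q = ∑ q ∈ M.erase p,
        if q.1 = p.1 then 0 else
          -(incidence q.2 p.1 * incidence q.2 q.1) * cbCoeff Δ Vf k q.1 y := by
      refine Finset.sum_congr rfl fun q hq => ?_
      rw [if_neg fun h => (Finset.ne_of_mem_erase hq)
        (hM.fst_inj q (Finset.mem_of_mem_erase hq) p hp h)]
      simp only [t]
      ring
    rw [h1, h2]
    linarith
  · intro x hx hxc hxM
    rw [hg, cbCoeff_eq_add_sum hsub hM hx hxc hy hyc hyM]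
    congr 1
    refine Finset.sum_congr rfl fun p hp => ?_
    rw [if_neg (hxM p hp)]
    simp only [t]
    ring

/-- A chain supported on matched simplices whose boundary vanishes on matched simplices is zero. -/
lemma eq_zero_of_boundaryAt_eq_zero {Δ : SComplex V} {Vf : Finset (Finset V × Finset V)} {k : ℕ}
    {ρ : Finset V → ℕ} (hM : IsRankedMatching (levelPairs Δ Vf k) ρ) {g : Finset V → ℤ}
    (hsupp : ∀ z ∈ Δ.faces, z.card = k + 1 → (∀ p ∈ levelPairs Δ Vf k, p.2 ≠ z) → g z = 0)
    (hbd : ∀ p ∈ levelPairs Δ Vf k, boundaryAt Δ k g p.1 = 0) :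
    ∀ z ∈ Δ.faces, z.card = k + 1 → g z = 0 := by
  by_contra! hne
  obtain ⟨z₀, hz₀, hz₀c, hgz₀⟩ := hne
  obtain ⟨z, hz, hmax⟩ := Finset.exists_max_image
    (Δ.faces.filter fun z => z.card = k + 1 ∧ g z ≠ 0) ρ
    ⟨z₀, Finset.mem_filter.2 ⟨hz₀, hz₀c, hgz₀⟩⟩
  obtain ⟨hzf, hzc, hgz⟩ := Finset.mem_filter.1 hz
  obtain ⟨p, hp, rfl⟩ : ∃ p ∈ levelPairs Δ Vf k, p.2 = z := by
    by_contra! h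
    exact hgz (hsupp z hzf hzc h)
  have hpf := (Finset.mem_filter.1 hp).2
  have hb := hbd p hp
  rw [boundaryAt, Finset.sum_eq_single p.2] at hb
  · apply hgz
    linear_combination incidence p.2 p.1 * hb - g p.2 * hpf.incidence_mul_self
  · intro w hw hwp
    obtain ⟨hwf, hwc⟩ := Finset.mem_filter.1 hw
    by_cases hgw : g w = 0
    · simp [hgw]
    obtain ⟨q, hq, rfl⟩ : ∃ q ∈ levelPairs Δ Vf k, q.2 = w := by
      by_contra! h
      exact hgw (hsupp w hwf hwc h)
    rw [incidence_eq_zero, zero_mul]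
    intro hpq
    have h1 := hM.rank_lt q hq p hp hpq (fun h => hwp (by rw [h]))
    have h2 := hmax q.2 (Finset.mem_filter.2 ⟨hwf, hwc, hgw⟩)
    omega
  · exact fun h => absurd (Finset.mem_filter.2 ⟨hzf, hzc⟩) h

/-- One step of a trajectory between simplices of cardinality `k + 1`. -/
def Descends (Δ : SComplex V) (Vf : Finset (Finset V × Finset V)) (k : ℕ) (z w : Finset V) : Prop :=
  z ∈ Δ.faces ∧ z.card = k + 1 ∧ ∃ p ∈ levelPairs Δ Vf k, p.2 = w ∧ p.1 ⊂ z ∧ w ≠ z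

/-- There is a walk of length `n` from `a` to `b` along the relation `R`. -/
def HasWalk {E : Type*} (R : E → E → Prop) (n : ℕ) (a b : E) : Prop :=
  ∃ f : ℕ → E, f 0 = a ∧ f n = b ∧ ∀ i < n, R (f i) (f (i + 1))

lemma hasWalk_zero {E : Type*} (R : E → E → Prop) (a : E) : HasWalk R 0 a a :=
  ⟨fun _ => a, rfl, rfl, by simp⟩

lemma hasWalk_one {E : Type*} {R : E → E → Prop} {a b : E} (h : R a b) : HasWalk R 1 a b :=
  ⟨fun i => if i = 0 then a else b, by simp, by simp, by simpa using h⟩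

/-- Concatenation of walks. -/
lemma exists_concat_walk {E : Type*} {R : E → E → Prop} {n m : ℕ} {a b c : E}
    (h₁ : HasWalk R n a b) (h₂ : HasWalk R m b c) :
    ∃ f : ℕ → E, f 0 = a ∧ f n = b ∧ f (n + m) = c ∧ ∀ i < n + m, R (f i) (f (i + 1)) := by
  obtain ⟨f, hf0, hfn, hf⟩ := h₁
  obtain ⟨g, hg0, hgm, hg⟩ := h₂
  refine ⟨fun i => if i ≤ n then f i else g (i - n), by simpa using hf0, by simpa using hfn,
    ?_, ?_⟩
  · rcases Nat.eq_zero_or_pos m with rfl | hm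
    · simp [hfn, ← hgm, hg0]
    · simp [hgm, hm.ne']
  · intro i hi
    rcases lt_trichotomy i n with h | rfl | h
    · simpa [h.le, Nat.succ_le_of_lt h] using hf i h
    · have := hg 0 (by omega)
      rw [hg0, zero_add] at this
      simpa [hfn] using this
    · have := hg (i - n) (by omega)
      rw [show i - n + 1 = i + 1 - n by omega] at this
      simpa [show ¬ i ≤ n by omega, show ¬ i + 1 ≤ n by omega] using this

lemma HasWalk.append {E : Type*} {R : E → E → Prop} {n m : ℕ} {a b c : E}
    (h₁ : HasWalk R n a b) (h₂ : HasWalk R m b c) : HasWalk R (n + m) a c := by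
  obtain ⟨f, h0, -, h1, h2⟩ := exists_concat_walk h₁ h₂
  exact ⟨f, h0, h1, h2⟩

lemma exists_hasWalk {E : Type*} {R : E → E → Prop} {a b : E} (h : Relation.ReflTransGen R a b) :
    ∃ n, HasWalk R n a b := by
  induction h with
  | refl => exact ⟨0, hasWalk_zero R a⟩
  | tail _ h ih =>
    obtain ⟨n, hn⟩ := ih
    exact ⟨n + 1, hn.append (hasWalk_one h)⟩

lemma levelPairs_fst_inj {Δ : SComplex V} {Vf : Finset (Finset V × Finset V)} (hV : IsDVF Δ Vf)
    (k : ℕ) : ∀ p ∈ levelPairs Δ Vf k, ∀ q ∈ levelPairs Δ Vf k, p.1 = q.1 → p = q := by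
  intro p hp q hq h
  by_contra hne
  exact (hV.2 p (Finset.mem_filter.1 hp).1 q (Finset.mem_filter.1 hq).1 hne).1 h

lemma levelPairs_snd_inj {Δ : SComplex V} {Vf : Finset (Finset V × Finset V)} (hV : IsDVF Δ Vf)
    (k : ℕ) : ∀ p ∈ levelPairs Δ Vf k, ∀ q ∈ levelPairs Δ Vf k, p.2 = q.2 → p = q := by
  intro p hp q hq h
  by_contra hne
  exact (hV.2 p (Finset.mem_filter.1 hp).1 q (Finset.mem_filter.1 hq).1 hne).2.2.2 h

/-- A gradient vector field has no closed descending walk. -/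
lemma not_transGen_descends {Δ : SComplex V} {Vf : Finset (Finset V × Finset V)}
    (hV : IsGVF Δ Vf) (k : ℕ) (z : Finset V) :
    ¬ Relation.TransGen (Descends Δ Vf k) z z := by
  intro h
  obtain ⟨b, hzb, hbz⟩ := Relation.TransGen.tail'_iff.1 h
  obtain ⟨n, hn⟩ := exists_hasWalk hzb
  obtain ⟨f, hf0, hfn, hf⟩ := hn.append (hasWalk_one hbz)
  choose! P hPM hP2 hP1 hne using fun i hi => (hf i hi).2.2
  have hY : ∀ i : Fin (n + 2), f i ∈ Δ.faces ∧ (f i).card = k + 1 := by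
    refine Fin.lastCases ?_ fun i => ⟨(hf i i.2).1, (hf i i.2).2.1⟩
    rw [Fin.val_last, hfn, ← hf0]
    exact ⟨(hf 0 (by omega)).1, (hf 0 (by omega)).2.1⟩
  have hflag (i : Fin (n + 1)) := (Finset.mem_filter.1 (hPM i i.2)).2
  refine hV.2 ⟨k, z, ⟨n + 1, fun i => f i, fun i => (P i).1, fun i => (hY i).1,
    fun i => (hflag i).1, fun i => (hY i).2, fun i => (hflag i).2.2.1, hf0, hfn,
    fun i => hP1 i i.2, fun i => ?_, fun i hi h => ?_, fun i => hne i i.2⟩, Nat.succ_pos n⟩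
  · have := (Finset.mem_filter.1 (hPM i i.2)).1
    rw [show f (i.succ : Fin (n + 2)) = (P i).2 from (hP2 i i.2).symm]
    exact this
  · have heq := levelPairs_fst_inj hV.1 k _ (hPM (i + 1) hi) _ (hPM i i.2) h
    apply hne (i + 1) hi
    rw [← hP2 (i + 1) hi, heq, hP2 i i.2]

lemma exists_rank {Δ : SComplex V} {Vf : Finset (Finset V × Finset V)} (hV : IsGVF Δ Vf) (k : ℕ) :
    ∃ (ρ : Finset V → ℕ) (N : ℕ), (∀ z, ρ z < N) ∧
      ∀ z w, Descends Δ Vf k z w → ρ w < ρ z := by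
  refine ⟨fun z => (Δ.faces.filter fun w => Relation.TransGen (Descends Δ Vf k) z w).card,
    Δ.faces.card + 1, fun z => Nat.lt_succ_of_le (Finset.card_filter_le _ _), fun z w h => ?_⟩
  apply Finset.card_lt_card
  refine (Finset.ssubset_iff_of_subset ?_).2 ⟨w, ?_, ?_⟩
  · intro u hu
    obtain ⟨hu, hwu⟩ := Finset.mem_filter.1 hu
    exact Finset.mem_filter.2 ⟨hu, Relation.TransGen.head h hwu⟩
  · obtain ⟨p, hp, rfl, -⟩ := h.2.2
    exact Finset.mem_filter.2 ⟨(Finset.mem_filter.1 hp).2.2.1, Relation.TransGen.single h⟩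
  · exact fun hw => not_transGen_descends hV k w (Finset.mem_filter.1 hw).2

lemma IsRankedMatching.of_descends {Δ : SComplex V} {Vf : Finset (Finset V × Finset V)}
    (hV : IsDVF Δ Vf) {k : ℕ} {ρ : Finset V → ℕ}
    (hρ : ∀ z w, Descends Δ Vf k z w → ρ w < ρ z) :
    IsRankedMatching (levelPairs Δ Vf k) ρ where
  fst_inj := levelPairs_fst_inj hV k
  snd_inj := levelPairs_snd_inj hV k
  rank_lt p hp q hq hqp hne := by
    have hpf := (Finset.mem_filter.1 hp).2
    exact hρ _ _ ⟨hpf.2.1, hpf.2.2.2.1, q, hq, rfl, hqp,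
      fun h => hne (levelPairs_snd_inj hV k _ hp _ hq h.symm)⟩

/-- Any descending walk from `σ0` to a coface of `τ0` is the unique trajectory. -/
lemma walk_through_eq {Δ : SComplex V} {Vf : Finset (Finset V × Finset V)} (hV : IsDVF Δ Vf)
    {k : ℕ} {σ0 τ0 : Finset V} (P0 : TrajD Δ Vf k σ0 τ0)
    (huniq : ∀ Q : TrajD Δ Vf k σ0 τ0, Q = P0) (hτ : ∀ p ∈ levelPairs Δ Vf k, p.1 ≠ τ0)
    {n m : ℕ} {z y : Finset V} (h₁ : HasWalk (Descends Δ Vf k) n σ0 z)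
    (h₂ : HasWalk (Descends Δ Vf k) m z y) (hy : τ0 ⊂ y) :
    n + m = P0.r ∧ ∃ i, P0.β i = z := by
  obtain ⟨f, hf0, hfn, hfy, hf⟩ := exists_concat_walk h₁ h₂
  set N := n + m with hN
  choose! P hPM hP2 hP1 hne using fun i hi => (hf i hi).2.2
  have hY : ∀ i : Fin (N + 1), f i ∈ Δ.faces ∧ (f i).card = k + 1 := by
    refine Fin.cases ?_ fun i => ?_
    · rw [Fin.val_zero, hf0, ← P0.first]
      exact ⟨P0.βmem 0, P0.βcard 0⟩
    · have := (Finset.mem_filter.1 (hPM i i.2)).2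
      rw [Fin.val_succ, ← hP2 i i.2]
      exact ⟨this.2.1, this.2.2.2.1⟩
  let a (i : ℕ) : Finset V := if i < N then (P i).1 else τ0
  have ha (i : ℕ) (hi : i < N) : a i = (P i).1 := if_pos hi
  have haN : a N = τ0 := if_neg (lt_irrefl N)
  have hτ0 : τ0 ∈ Δ.faces ∧ τ0.card = k := by
    rw [← P0.last]
    exact ⟨P0.αmem _, P0.αcard _⟩
  have hX : ∀ i : Fin (N + 1), a i ∈ Δ.faces ∧ (a i).card = k ∧ a i ⊂ f i := by
    refine Fin.lastCases ?_ fun i => ?_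
    · rw [Fin.val_last, haN, hfy]
      exact ⟨hτ0.1, hτ0.2, hy⟩
    · have := (Finset.mem_filter.1 (hPM i i.2)).2
      rw [Fin.val_castSucc, ha i i.2]
      exact ⟨this.1, this.2.2.1, hP1 i i.2⟩
  have hvpair (i : Fin N) : (a i, f (i + 1)) ∈ Vf := by
    rw [ha i i.2, ← hP2 i i.2]
    exact (Finset.mem_filter.1 (hPM i i.2)).1
  have hane (i : Fin N) : a (i + 1) ≠ a i := by
    rw [ha i i.2]
    rcases Nat.lt_or_ge (i + 1) N with h | h
    · rw [ha _ h]
      intro h'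
      have heq := levelPairs_fst_inj hV k _ (hPM (i + 1) h) _ (hPM i i.2) h'
      apply hne (i + 1) h
      rw [← hP2 (i + 1) h, heq, hP2 i i.2]
    · rw [show (i : ℕ) + 1 = N by omega, haN]
      exact (hτ _ (hPM i i.2)).symm
  have hQ := huniq ⟨N, fun i => f i, fun i => a i, fun i => (hY i).1, fun i => (hX i).1,
    fun i => (hY i).2, fun i => (hX i).2.1, hf0, haN, fun i => (hX i).2.2, fun i => hvpair i,
    fun i => hane i, fun i => hne i i.2⟩
  rw [← hQ]
  exact ⟨rfl, ⟨n, Nat.lt_succ_of_le (Nat.le_add_right n m)⟩, hfn⟩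

section Cancellation

variable {Δ : SComplex V} {Vf : Finset (Finset V × Finset V)} {k : ℕ} {σ0 τ0 : Finset V}

lemma pair_mem_levelPairs (hV : IsDVF Δ Vf) (P0 : TrajD Δ Vf k σ0 τ0) (i : Fin P0.r) :
    (P0.α i.castSucc, P0.β i.succ) ∈ levelPairs Δ Vf k :=
  Finset.mem_filter.2 ⟨P0.vpair i, P0.αmem _, P0.βmem _, P0.αcard _, P0.βcard _,
    (hV.1 _ (P0.vpair i)).2.2.1⟩

lemma descends_traj (hV : IsDVF Δ Vf) (P0 : TrajD Δ Vf k σ0 τ0) (i : Fin P0.r) :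
    Descends Δ Vf k (P0.β i.castSucc) (P0.β i.succ) :=
  ⟨P0.βmem _, P0.βcard _, _, pair_mem_levelPairs hV P0 i, rfl, P0.sub _, P0.βne i⟩

lemma hasWalk_traj (hV : IsDVF Δ Vf) (P0 : TrajD Δ Vf k σ0 τ0) {i j : Fin (P0.r + 1)}
    (hij : i ≤ j) : HasWalk (Descends Δ Vf k) (j - i) (P0.β i) (P0.β j) := by
  have hij' : (i : ℕ) ≤ j := hij
  have hj := j.2
  refine ⟨fun t => P0.β ⟨min (i + t) P0.r, by omega⟩, ?_, ?_, ?_⟩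
  · exact congrArg P0.β (Fin.ext (show min ((i : ℕ) + 0) P0.r = i by omega))
  · exact congrArg P0.β (Fin.ext (show min ((i : ℕ) + (j - i)) P0.r = j by omega))
  · intro t ht
    have := descends_traj hV P0 ⟨i + t, by omega⟩
    convert this using 2
    · ext
      simp only [Fin.val_castSucc]
      omega
    · ext
      simp only [Fin.val_succ]
      omega

lemma reachable_traj (hV : IsDVF Δ Vf) (P0 : TrajD Δ Vf k σ0 τ0) (i : Fin (P0.r + 1)) :
    Relation.ReflTransGen (Descends Δ Vf k) σ0 (P0.β i) := by
  induction i using Fin.induction with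
  | zero => rw [P0.first]
  | succ i ih => exact ih.tail (descends_traj hV P0 i)

lemma eq_of_mem_levelPairs_fst (hV : IsDVF Δ Vf) (P0 : TrajD Δ Vf k σ0 τ0)
    (hτ : ∀ p ∈ levelPairs Δ Vf k, p.1 ≠ τ0) {p : Finset V × Finset V}
    (hp : p ∈ levelPairs Δ Vf k) {i : Fin (P0.r + 1)} (h : p.1 = P0.α i) :
    ∃ j : Fin P0.r, i = j.castSucc ∧ p = (P0.α j.castSucc, P0.β j.succ) := by
  induction i using Fin.lastCases with
  | last => exact absurd (h.trans P0.last) (hτ p hp)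
  | cast j => exact ⟨j, rfl, levelPairs_fst_inj hV k _ hp _ (pair_mem_levelPairs hV P0 j) h⟩

lemma eq_of_mem_levelPairs_snd (hV : IsDVF Δ Vf) (P0 : TrajD Δ Vf k σ0 τ0)
    (hσ : ∀ p ∈ levelPairs Δ Vf k, p.2 ≠ σ0) {p : Finset V × Finset V}
    (hp : p ∈ levelPairs Δ Vf k) {i : Fin (P0.r + 1)} (h : p.2 = P0.β i) :
    ∃ j : Fin P0.r, i = j.succ ∧ p = (P0.α j.castSucc, P0.β j.succ) := by
  induction i using Fin.cases with
  | zero => exact absurd (h.trans P0.first) (hσ p hp)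
  | succ j => exact ⟨j, rfl, levelPairs_snd_inj hV k _ hp _ (pair_mem_levelPairs hV P0 j) h⟩

lemma mem_levelPairs_cancelPair (P0 : TrajD Δ Vf k σ0 τ0) {p : Finset V × Finset V} :
    p ∈ levelPairs Δ (cancelPair P0) k ↔
      (p ∈ levelPairs Δ Vf k ∧ ∀ i : Fin P0.r, p ≠ (P0.α i.castSucc, P0.β i.succ)) ∨
        ∃ i, p = (P0.α i, P0.β i) := by
  simp only [levelPairs, cancelPair, Finset.mem_filter, Finset.mem_union, Finset.mem_sdiff,
    Finset.mem_image, Finset.mem_univ, true_and, not_exists]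
  constructor
  · rintro ⟨⟨h1, h2⟩ | ⟨i, hi⟩, hf⟩
    · exact Or.inl ⟨⟨h1, hf⟩, fun i h => h2 i h.symm⟩
    · exact Or.inr ⟨i, hi.symm⟩
  · rintro (⟨⟨h1, hf⟩, h2⟩ | ⟨i, rfl⟩)
    · exact ⟨Or.inl ⟨h1, fun i h => h2 i h.symm⟩, hf⟩
    · exact ⟨Or.inr ⟨i, rfl⟩, P0.αmem _, P0.βmem _, P0.αcard _, P0.βcard _, P0.sub _⟩

/-- A simplex reachable from `σ0` that contains some `α` lies on the trajectory. -/
lemma mem_traj_of_reachable (hV : IsDVF Δ Vf) (P0 : TrajD Δ Vf k σ0 τ0)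
    (huniq : ∀ Q : TrajD Δ Vf k σ0 τ0, Q = P0) (hτ : ∀ p ∈ levelPairs Δ Vf k, p.1 ≠ τ0)
    {z : Finset V} (hz : z ∈ Δ.faces) (hzc : z.card = k + 1)
    (hreach : Relation.ReflTransGen (Descends Δ Vf k) σ0 z) {j : Fin (P0.r + 1)}
    (hj : P0.α j ⊂ z) : ∃ i, P0.β i = z := by
  obtain ⟨n, hn⟩ := exists_hasWalk hreach
  induction j using Fin.lastCases with
  | last =>
    exact (walk_through_eq hV P0 huniq hτ hn (hasWalk_zero _ z) (by simpa only [P0.last] using hj)).2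
  | cast j =>
    by_cases hzj : P0.β j.succ = z
    · exact ⟨_, hzj⟩
    have hstep : Descends Δ Vf k z (P0.β j.succ) :=
      ⟨hz, hzc, _, pair_mem_levelPairs hV P0 j, rfl, hj, hzj⟩
    exact (walk_through_eq hV P0 huniq hτ hn
      ((hasWalk_one hstep).append (hasWalk_traj hV P0 (Fin.le_last _)))
      (by simpa only [P0.last] using P0.sub (Fin.last _))).2

/-- No shortcut exists along the unique trajectory. -/
lemma lt_of_ssubset_traj (hV : IsDVF Δ Vf) (P0 : TrajD Δ Vf k σ0 τ0)
    (huniq : ∀ Q : TrajD Δ Vf k σ0 τ0, Q = P0) (hτ : ∀ p ∈ levelPairs Δ Vf k, p.1 ≠ τ0)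
    {i j : Fin (P0.r + 1)} (hij : i ≠ j) (hj : P0.α j ⊂ P0.β i) : j < i := by
  have hi : HasWalk (Descends Δ Vf k) i σ0 (P0.β i) := by
    simpa [P0.first] using hasWalk_traj hV P0 (Fin.zero_le i)
  induction j using Fin.lastCases with
  | last =>
    have := (walk_through_eq hV P0 huniq hτ hi (hasWalk_zero _ _) (by simpa only [P0.last] using hj)).1
    exact absurd (Fin.ext (by simpa using this)) hij
  | cast j =>
    by_cases hzj : i = j.succ
    · subst hzj
      exact Fin.castSucc_lt_succ
    by_cases hβ : P0.β j.succ = P0.β i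
    · have h₁ := walk_through_eq hV P0 huniq hτ hi (hasWalk_traj hV P0 (Fin.le_last _))
        (by simpa only [P0.last] using P0.sub (Fin.last _))
      have h₂ := walk_through_eq hV P0 huniq hτ hi
        (hβ ▸ hasWalk_traj hV P0 (Fin.le_last j.succ))
        (by simpa only [P0.last] using P0.sub (Fin.last _))
      have h₁ := h₁.1
      have h₂ := h₂.1
      simp only [Fin.val_last, Fin.val_succ] at h₁ h₂
      have := j.2
      exact absurd (Fin.ext (by simp only [Fin.val_succ]; omega)) hzj
    have hstep : Descends Δ Vf k (P0.β i) (P0.β j.succ) :=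
      ⟨P0.βmem _, P0.βcard _, _, pair_mem_levelPairs hV P0 j, rfl, hj, hβ⟩
    have := (walk_through_eq hV P0 huniq hτ hi
      ((hasWalk_one hstep).append (hasWalk_traj hV P0 (Fin.le_last _)))
      (by simpa only [P0.last] using P0.sub (Fin.last _))).1
    simp only [Fin.val_last, Fin.val_succ] at this
    have hj := j.2
    exact absurd (Fin.ext (by simp only [Fin.val_castSucc]; omega)) hij

/-- The vector field obtained by cancellation is again an acyclic matching in the dimensions
concerned. -/
lemma exists_isRankedMatching_cancelPair (hV : IsGVF Δ Vf) (P0 : TrajD Δ Vf k σ0 τ0)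
    (huniq : ∀ Q : TrajD Δ Vf k σ0 τ0, Q = P0) (hτ : ∀ p ∈ levelPairs Δ Vf k, p.1 ≠ τ0)
    (hσ : ∀ p ∈ levelPairs Δ Vf k, p.2 ≠ σ0) :
    ∃ ρ, IsRankedMatching (levelPairs Δ (cancelPair P0) k) ρ := by
  obtain ⟨ρ, N, hN, hρ⟩ := exists_rank hV k
  have hβinj : Function.Injective P0.β :=
    (Fin.strictAnti_iff_succ_lt (f := fun i => ρ (P0.β i)).2
      fun i => hρ _ _ (descends_traj hV.1 P0 i)).injective.of_comp
  have hαinj : Function.Injective P0.α := by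
    intro i i' h
    induction i using Fin.lastCases with
    | last =>
      induction i' using Fin.lastCases with
      | last => rfl
      | cast j => exact absurd (h.symm.trans P0.last) (hτ _ (pair_mem_levelPairs hV.1 P0 j))
    | cast j =>
      obtain ⟨j', rfl, h'⟩ :=
        eq_of_mem_levelPairs_fst hV.1 P0 hτ (pair_mem_levelPairs hV.1 P0 j) h
      rw [Fin.succ_injective _ (hβinj (congrArg Prod.snd h'))]
  have hnotmem {p : Finset V × Finset V} (hp : p ∈ levelPairs Δ Vf k)
      (hp' : ∀ i : Fin P0.r, p ≠ (P0.α i.castSucc, P0.β i.succ)) : ¬ ∃ i, P0.β i = p.2 := by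
    rintro ⟨i, hi⟩
    obtain ⟨j, -, h⟩ := eq_of_mem_levelPairs_snd hV.1 P0 hσ hp hi.symm
    exact hp' j h
  let ρ' (z : Finset V) : ℕ :=
    if h : ∃ i, P0.β i = z then N + (h.choose : ℕ)
    else if Relation.ReflTransGen (Descends Δ Vf k) σ0 z then ρ z else N + P0.r + 1 + ρ z
  have hρβ (i : Fin (P0.r + 1)) : ρ' (P0.β i) = N + i := by
    have h : ∃ i', P0.β i' = P0.β i := ⟨i, rfl⟩
    simp only [ρ']
    rw [dif_pos h, hβinj h.choose_spec]
  refine ⟨ρ', ?_, ?_, ?_⟩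
  · intro p hp q hq h
    rcases (mem_levelPairs_cancelPair P0).1 hp with ⟨hp, hp'⟩ | ⟨i, rfl⟩ <;>
      rcases (mem_levelPairs_cancelPair P0).1 hq with ⟨hq, hq'⟩ | ⟨j, rfl⟩
    · exact levelPairs_fst_inj hV.1 k p hp q hq h
    · obtain ⟨i, -, h'⟩ := eq_of_mem_levelPairs_fst hV.1 P0 hτ hp h
      exact absurd h' (hp' i)
    · obtain ⟨i, -, h'⟩ := eq_of_mem_levelPairs_fst hV.1 P0 hτ hq h.symm
      exact absurd h' (hq' i)
    · rw [hαinj h]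
  · intro p hp q hq h
    rcases (mem_levelPairs_cancelPair P0).1 hp with ⟨hp, hp'⟩ | ⟨i, rfl⟩ <;>
      rcases (mem_levelPairs_cancelPair P0).1 hq with ⟨hq, hq'⟩ | ⟨j, rfl⟩
    · exact levelPairs_snd_inj hV.1 k p hp q hq h
    · exact absurd ⟨j, h.symm⟩ (hnotmem hp hp')
    · exact absurd ⟨i, h⟩ (hnotmem hq hq')
    · rw [hβinj h]
  · intro p hp q hq hqp hne
    rcases (mem_levelPairs_cancelPair P0).1 hp with ⟨hp, hp'⟩ | ⟨i, rfl⟩ <;>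
      rcases (mem_levelPairs_cancelPair P0).1 hq with ⟨hq, hq'⟩ | ⟨j, rfl⟩
    · have hpf := (Finset.mem_filter.1 hp).2
      have hstep : Descends Δ Vf k p.2 q.2 := ⟨hpf.2.1, hpf.2.2.2.1, q, hq, rfl, hqp,
        fun h => hne (levelPairs_snd_inj hV.1 k _ hp _ hq h.symm)⟩
      have hlt := hρ _ _ hstep
      have hqN := hN q.2
      simp only [ρ']
      rw [dif_neg (hnotmem hp hp'), dif_neg (hnotmem hq hq')]
      by_cases hr : Relation.ReflTransGen (Descends Δ Vf k) σ0 p.2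
      · rwa [if_pos hr, if_pos (hr.tail hstep)]
      · rw [if_neg hr]
        split_ifs <;> omega
    · have hpf := (Finset.mem_filter.1 hp).2
      have hr : ¬ Relation.ReflTransGen (Descends Δ Vf k) σ0 p.2 := fun hr =>
        hnotmem hp hp' (mem_traj_of_reachable hV.1 P0 huniq hτ hpf.2.1 hpf.2.2.2.1 hr hqp)
      have hj := j.2
      simp only
      rw [hρβ]
      simp only [ρ']
      rw [dif_neg (hnotmem hp hp'), if_neg hr]
      omega
    · have hstep : Descends Δ Vf k (P0.β i) q.2 := ⟨P0.βmem i, P0.βcard i, q, hq, rfl, hqp,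
        fun h => hnotmem hq hq' ⟨i, h.symm⟩⟩
      have hqN := hN q.2
      have hr := reachable_traj hV.1 P0 i
      simp only
      rw [hρβ]
      simp only [ρ']
      rw [dif_neg (hnotmem hq hq'), if_pos (hr.tail hstep)]
      omega
    · have hij : i ≠ j := by
        rintro rfl
        exact hne rfl
      have : (j : ℕ) < i := lt_of_ssubset_traj hV.1 P0 huniq hτ hij hqp
      simp only
      rw [hρβ, hρβ]
      omega

end Cancellation

/-- Reversal of a co-trajectory. -/
def reverseCoTraj {Δ : SComplex V} {Vf : Finset (Finset V × Finset V)} {k : ℕ} {s t : Finset V}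
    (Q : CoTrajU Δ Vf k s t) : TrajD Δ Vf k t s where
  r := Q.r
  β i := Q.γ i.rev
  α i := Q.β i.rev
  βmem i := Q.γmem _
  αmem i := Q.βmem _
  βcard i := Q.γcard _
  αcard i := Q.βcard _
  first := by rw [Fin.rev_zero, Q.last]
  last := by rw [Fin.rev_last, Q.first]
  sub i := Q.sub _
  vpair i := by rw [Fin.rev_castSucc, Fin.rev_succ]; exact Q.vpair _
  αne i := by rw [Fin.rev_castSucc, Fin.rev_succ]; exact Q.βne _
  βne i := by rw [Fin.rev_castSucc, Fin.rev_succ]; exact (Q.γne _).symm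

/-- Reversal of a trajectory. -/
def reverseTraj {Δ : SComplex V} {Vf : Finset (Finset V × Finset V)} {k : ℕ} {s t : Finset V}
    (P : TrajD Δ Vf k s t) : CoTrajU Δ Vf k t s where
  r := P.r
  β i := P.α i.rev
  γ i := P.β i.rev
  βmem i := P.αmem _
  γmem i := P.βmem _
  βcard i := P.αcard _
  γcard i := P.βcard _
  first := by rw [Fin.rev_zero, P.last]
  last := by rw [Fin.rev_last, P.first]
  sub i := P.sub _
  vpair i := by rw [Fin.rev_castSucc, Fin.rev_succ]; exact P.vpair _
  βne i := by rw [Fin.rev_castSucc, Fin.rev_succ]; exact P.αne _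
  γne i := by rw [Fin.rev_castSucc, Fin.rev_succ]; exact (P.βne _).symm

lemma reverseTraj_reverseCoTraj {Δ : SComplex V} {Vf : Finset (Finset V × Finset V)} {k : ℕ}
    {s t : Finset V} (Q : CoTrajU Δ Vf k s t) : reverseTraj (reverseCoTraj Q) = Q := by
  obtain ⟨r, β, γ, _, _, _, _, _, _, _, _, _, _⟩ := Q
  simp [reverseTraj, reverseCoTraj]

lemma wCTU_mul_self {Δ : SComplex V} {Vf : Finset (Finset V × Finset V)}
    (hsub : ∀ p ∈ Vf, p.1 ⊂ p.2) {k : ℕ} {s t : Finset V} (Q : CoTrajU Δ Vf k s t) :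
    wCTU Q * wCTU Q = 1 := by
  have hlast := incidence_mul_self (Q.sub (Fin.last Q.r)) (by rw [Q.βcard, Q.γcard])
  rw [wCTU, mul_mul_mul_comm, hlast, mul_one, ← Finset.prod_mul_distrib]
  refine Finset.prod_eq_one fun i _ => ?_
  have h₁ := incidence_mul_self (Q.sub i.castSucc) (by rw [Q.βcard, Q.γcard])
  have h₂ := incidence_mul_self (hsub _ (Q.vpair i)) (by simp only [Q.βcard, Q.γcard])
  simp only at h₂
  rw [neg_mul_neg, mul_mul_mul_comm, h₁, h₂, mul_one]

lemma cbCoeff_mul_self_of_unique {Δ : SComplex V} {Vf : Finset (Finset V × Finset V)}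
    (hsub : ∀ p ∈ Vf, p.1 ⊂ p.2) {k : ℕ} {σ0 τ0 : Finset V} (P0 : TrajD Δ Vf k σ0 τ0)
    (huniq : ∀ Q : TrajD Δ Vf k σ0 τ0, Q = P0) :
    cbCoeff Δ Vf k τ0 σ0 * cbCoeff Δ Vf k τ0 σ0 = 1 := by
  have h : cbCoeff Δ Vf k τ0 σ0 = wCTU (reverseTraj P0) := by
    refine finsum_eq_single _ _ fun Q hQ => absurd ?_ hQ
    rw [← huniq (reverseCoTraj Q), reverseTraj_reverseCoTraj]
  rw [h, wCTU_mul_self hsub]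

lemma levelPairs_snd_ne_of_mem_critC {Δ : SComplex V} {Vf : Finset (Finset V × Finset V)} {k : ℕ}
    (hk : 1 ≤ k) {y : Finset V} (hy : y ∈ critC Δ Vf (k + 1)) :
    ∀ p ∈ levelPairs Δ Vf k, p.2 ≠ y := by
  obtain ⟨-, hc, -, -, h | h⟩ := Finset.mem_filter.1 hy
  · exact fun p hp he => (h p (Finset.mem_filter.1 hp).1).2 he.symm
  · omega

lemma levelPairs_fst_ne_of_mem_critC {Δ : SComplex V} {Vf : Finset (Finset V × Finset V)} {k : ℕ}
    (hV : IsDVF Δ Vf) {x : Finset V} (hx : x ∈ critC Δ Vf k) :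
    ∀ p ∈ levelPairs Δ Vf k, p.1 ≠ x := by
  intro p hp he
  have hpV := (Finset.mem_filter.1 hp).1
  obtain ⟨-, hc, -, hne, h | ⟨-, h⟩⟩ := Finset.mem_filter.1 hx
  · exact (h p hpV).1 he.symm
  · by_cases hpq : p = (∅, x)
    · rw [hpq] at he
      exact hne.ne_empty he.symm
    · exact (hV.2 p hpV _ h hpq).2.1 he

lemma ssubset_of_mem_cancelPair {Δ : SComplex V} {Vf : Finset (Finset V × Finset V)} {k : ℕ}
    (hV : IsDVF Δ Vf) {σ0 τ0 : Finset V} (P0 : TrajD Δ Vf k σ0 τ0) :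
    ∀ p ∈ cancelPair P0, p.1 ⊂ p.2 := by
  intro p hp
  rcases Finset.mem_union.1 hp with hp | hp
  · exact (hV.1 p (Finset.mem_sdiff.1 hp).1).2.2.1
  · obtain ⟨i, -, rfl⟩ := Finset.mem_image.1 hp
    exact P0.sub i

/-- Cancellation removes exactly `σ0` from the critical simplices of its dimension. -/
lemma critC_cancelPair_succ {Δ : SComplex V} {Vf : Finset (Finset V × Finset V)} {k : ℕ}
    (hk : 1 ≤ k) {σ0 τ0 : Finset V} (P0 : TrajD Δ Vf k σ0 τ0) :
    critC Δ (cancelPair P0) (k + 1) = (critC Δ Vf (k + 1)).erase σ0 := by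
  ext z
  rw [Finset.mem_erase]
  constructor
  · intro hz'
    obtain ⟨hz, hc, -, hne, h | h⟩ := Finset.mem_filter.1 hz'
    · have hzβ (i) : z ≠ P0.β i := (h (P0.α i, P0.β i) (Finset.mem_union_right _
        (Finset.mem_image_of_mem _ (Finset.mem_univ i)))).2
      refine ⟨P0.first ▸ hzβ 0, Finset.mem_filter.2 ⟨hz, hc, hz, hne, Or.inl fun p hp => ?_⟩⟩
      by_cases hp' : ∃ i : Fin P0.r, (P0.α i.castSucc, P0.β i.succ) = p
      · obtain ⟨i, rfl⟩ := hp'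
        refine ⟨fun he => ?_, hzβ _⟩
        have := P0.αcard i.castSucc
        simp only at he
        rw [← he] at this
        omega
      · exact h p (Finset.mem_union_left _ (Finset.mem_sdiff.2 ⟨hp, by simpa using hp'⟩))
    · omega
  · rintro ⟨hzσ, hz'⟩
    obtain ⟨hz, hc, -, hne, h | h⟩ := Finset.mem_filter.1 hz'
    · refine Finset.mem_filter.2 ⟨hz, hc, hz, hne, Or.inl fun p hp => ?_⟩
      rcases Finset.mem_union.1 hp with hp | hp
      · exact h p (Finset.mem_sdiff.1 hp).1
      · obtain ⟨i, -, rfl⟩ := Finset.mem_image.1 hp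
        refine ⟨fun he => ?_, fun he => ?_⟩
        · have := P0.αcard i
          simp only at he
          rw [← he] at this
          omega
        · induction i using Fin.cases with
          | zero => exact hzσ (he.trans P0.first)
          | succ j => exact (h _ (P0.vpair j)).2 he
    · omega

/-- Critical simplices other than `τ0` stay critical after cancellation. -/
lemma mem_critC_cancelPair {Δ : SComplex V} {Vf : Finset (Finset V × Finset V)} {k : ℕ}
    {σ0 τ0 : Finset V} (P0 : TrajD Δ Vf k σ0 τ0) {x : Finset V}
    (hx : x ∈ critC Δ Vf k) (hxτ : x ≠ τ0) : x ∈ critC Δ (cancelPair P0) k := by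
  obtain ⟨hxf, hc, -, hne, h⟩ := Finset.mem_filter.1 hx
  refine Finset.mem_filter.2 ⟨hxf, hc, hxf, hne, h.imp (fun h p hp => ?_) fun h => ⟨h.1, ?_⟩⟩
  · rcases Finset.mem_union.1 hp with hp | hp
    · exact h p (Finset.mem_sdiff.1 hp).1
    · obtain ⟨i, -, rfl⟩ := Finset.mem_image.1 hp
      refine ⟨fun he => ?_, fun he => ?_⟩
      · induction i using Fin.lastCases with
        | last => exact hxτ (he.trans P0.last)
        | cast j => exact (h _ (P0.vpair j)).1 he
      · have := P0.βcard i
        simp only at he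
        rw [← he] at this
        omega
  · refine Finset.mem_union_left _ (Finset.mem_sdiff.2 ⟨h.2, fun hmem => ?_⟩)
    obtain ⟨i, -, hi⟩ := Finset.mem_image.1 hmem
    have := P0.βcard i.succ
    rw [(Prod.mk.inj hi).2] at this
    omega

/-- The Morse coefficients after cancellation are the Schur complement of the cancelled entry. -/
theorem cbCoeff_cancelPair {Δ : SComplex V} {Vf : Finset (Finset V × Finset V)} {k : ℕ}
    (hk : 1 ≤ k) (hV : IsGVF Δ Vf) {σ0 τ0 : Finset V} (hσ0 : σ0 ∈ critC Δ Vf (k + 1))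
    (hτ0 : τ0 ∈ critC Δ Vf k) (P0 : TrajD Δ Vf k σ0 τ0)
    (huniq : ∀ Q : TrajD Δ Vf k σ0 τ0, Q = P0) {x y : Finset V} (hx : x ∈ critC Δ Vf k)
    (hxτ : x ≠ τ0) (hy : y ∈ critC Δ Vf (k + 1)) (hyσ : y ≠ σ0) :
    cbCoeff Δ (cancelPair P0) k x y = cbCoeff Δ Vf k x y -
      cbCoeff Δ Vf k τ0 σ0 * cbCoeff Δ Vf k x σ0 * cbCoeff Δ Vf k τ0 y := by
  have hsub : ∀ p ∈ Vf, p.1 ⊂ p.2 := fun p hp => (hV.1.1 p hp).2.2.1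
  have hsubW := ssubset_of_mem_cancelPair hV.1 P0
  have hτ := levelPairs_fst_ne_of_mem_critC hV.1 hτ0
  have hσ := levelPairs_snd_ne_of_mem_critC hk hσ0
  have hxV := levelPairs_fst_ne_of_mem_critC hV.1 hx
  have hyV := levelPairs_snd_ne_of_mem_critC hk hy
  obtain ⟨ρ, -, -, hρ⟩ := exists_rank hV k
  have hM := IsRankedMatching.of_descends hV.1 hρ
  obtain ⟨ρ', hM'⟩ := exists_isRankedMatching_cancelPair hV P0 huniq hτ hσ
  have hyW : ∀ p ∈ levelPairs Δ (cancelPair P0) k, p.2 ≠ y := by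
    refine levelPairs_snd_ne_of_mem_critC hk ?_
    rw [critC_cancelPair_succ hk]
    exact Finset.mem_erase.2 ⟨hyσ, hy⟩
  have hxW : ∀ p ∈ levelPairs Δ (cancelPair P0) k, p.1 ≠ x := by
    intro p hp he
    rcases (mem_levelPairs_cancelPair P0).1 hp with ⟨hp, -⟩ | ⟨i, rfl⟩
    · exact hxV p hp he
    · induction i using Fin.lastCases with
      | last => exact hxτ (he.symm.trans P0.last)
      | cast j => exact hxV _ (pair_mem_levelPairs hV.1 P0 j) he
  obtain ⟨hxf, hxc, -⟩ := Finset.mem_filter.1 hx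
  obtain ⟨hyf, hyc, -⟩ := Finset.mem_filter.1 hy
  obtain ⟨hτf, hτc, -⟩ := Finset.mem_filter.1 hτ0
  obtain ⟨hσf, hσc, -⟩ := Finset.mem_filter.1 hσ0
  obtain ⟨g, hgy, hg0, hgM, hgx⟩ := exists_chain_boundaryAt hsub hM hyf hyc hyV
  obtain ⟨g₀, hg₀σ, hg₀0, hg₀M, hg₀x⟩ := exists_chain_boundaryAt hsub hM hσf hσc hσ
  obtain ⟨g', hg'y, hg'0, hg'M, hg'x⟩ := exists_chain_boundaryAt hsubW hM' hyf hyc hyW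
  set c := cbCoeff Δ Vf k τ0 σ0 * cbCoeff Δ Vf k τ0 y with hc
  have hlin (u : Finset V) : boundaryAt Δ k (fun z => g z - c * g₀ z - g' z) u =
      boundaryAt Δ k g u - c * boundaryAt Δ k g₀ u - boundaryAt Δ k g' u := by
    simp only [boundaryAt, Finset.mul_sum, ← Finset.sum_sub_distrib]
    exact Finset.sum_congr rfl fun z _ => by ring
  have hzero := eq_zero_of_boundaryAt_eq_zero hM' (g := fun z => g z - c * g₀ z - g' z) ?_ ?_
  · have hb : boundaryAt Δ k (fun z => g z - c * g₀ z - g' z) x = 0 := by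
      refine Finset.sum_eq_zero fun z hz => ?_
      obtain ⟨hzf, hzc⟩ := Finset.mem_filter.1 hz
      exact mul_eq_zero_of_right _ (hzero z hzf hzc)
    rw [hlin, hgx x hxf hxc hxV, hg₀x x hxf hxc hxV, hg'x x hxf hxc hxW] at hb
    linear_combination -hb
  · intro z _ _ hzW
    have hzβ (i) : P0.β i ≠ z :=
      hzW (P0.α i, P0.β i) ((mem_levelPairs_cancelPair P0).2 (Or.inr ⟨i, rfl⟩))
    have hzσ : z ≠ σ0 := fun h => hzβ 0 (P0.first.trans h.symm)
    have hzV : ∀ p ∈ levelPairs Δ Vf k, p.2 ≠ z := by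
      intro p hp he
      by_cases hp' : ∃ i : Fin P0.r, p = (P0.α i.castSucc, P0.β i.succ)
      · obtain ⟨i, rfl⟩ := hp'
        exact hzβ _ he
      · exact hzW p ((mem_levelPairs_cancelPair P0).2 (Or.inl ⟨hp, not_exists.1 hp'⟩)) he
    simp only [hg₀0 z hzσ hzV]
    by_cases hzy : z = y
    · rw [hzy, hgy, hg'y]
      ring
    · rw [hg0 z hzy hzV, hg'0 z hzy hzW]
      ring
  · intro p hp
    rw [hlin, hg'M p hp]
    have hVp {q : Finset V × Finset V} (hq : q ∈ levelPairs Δ Vf k) :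
        boundaryAt Δ k g q.1 - c * boundaryAt Δ k g₀ q.1 - 0 = 0 := by
      rw [hgM q hq, hg₀M q hq]
      ring
    rcases (mem_levelPairs_cancelPair P0).1 hp with ⟨hp, -⟩ | ⟨i, rfl⟩
    · exact hVp hp
    · induction i using Fin.lastCases with
      | last =>
        simp only [P0.last]
        rw [hgx τ0 hτf hτc hτ, hg₀x τ0 hτf hτc hτ, hc]
        linear_combination (-cbCoeff Δ Vf k τ0 y) * cbCoeff_mul_self_of_unique hsub P0 huniq
      | cast j =>
        have h := hVp (pair_mem_levelPairs hV.1 P0 j)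
        exact h

lemma morseCoboundary_single {Δ : SComplex V} {Vf : Finset (Finset V × Finset V)} {k : ℕ}
    {x : Finset V} (hx : x ∈ critC Δ Vf k) :
    morseCoboundary Δ Vf k (Finsupp.single x 1) =
      ∑ y ∈ critC Δ Vf (k + 1), cbCoeff Δ Vf k x y • Finsupp.single y (1 : ℤ) := by
  simp [morseCoboundary, hx]

end MorseCancellation

/-- If δ_k^V τ_i = Σ_j a_{ji} σ_j then δ_k^W τ_i = Σ_{j≥1} (a_{ji} - a_{00} a_{0i} a_{j0}) σ_j. -/
theorem statement_12 (Δ : SComplex V) (d k : ℕ)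
    (hdim : ∀ σ ∈ Δ.faces, σ.card ≤ d + 1) (hdim' : ∃ σ ∈ Δ.faces, σ.card = d + 1)
    (hk1 : 1 ≤ k) (hkd : k ≤ d)
    (Vf : Finset (Finset V × Finset V)) (hV : IsGVF Δ Vf)
    (σ0 τ0 : Finset V) (hσ0 : σ0 ∈ critC Δ Vf (k + 1)) (hτ0 : τ0 ∈ critC Δ Vf k)
    (P0 : TrajD Δ Vf k σ0 τ0) (hP0uniq : ∀ Q : TrajD Δ Vf k σ0 τ0, Q = P0)
    (n m : ℕ) (σ : Fin (n + 1) → Finset V) (τ : Fin (m + 1) → Finset V)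
    (hσinj : Function.Injective σ) (hτinj : Function.Injective τ)
    (hσzero : σ 0 = σ0) (hτzero : τ 0 = τ0)
    (hcritσ : critC Δ Vf (k + 1) = Finset.image σ Finset.univ)
    (hcritτ : critC Δ Vf k = Finset.image τ Finset.univ)
    (a : Fin (n + 1) → Fin (m + 1) → ℤ)
    (ha : ∀ i : Fin (m + 1), morseCoboundary Δ Vf k (Finsupp.single (τ i) 1) =
      ∑ j : Fin (n + 1), a j i • Finsupp.single (σ j) (1 : ℤ)) :
    ∀ i : Fin m, morseCoboundary Δ (cancelPair P0) k (Finsupp.single (τ i.succ) 1) =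
      ∑ j : Fin n, (a j.succ i.succ - a 0 0 * a 0 i.succ * a j.succ 0) •
        Finsupp.single (σ j.succ) (1 : ℤ) := by
  have hτmem (i) : τ i ∈ critC Δ Vf k := by
    rw [hcritτ]
    exact Finset.mem_image_of_mem _ (Finset.mem_univ i)
  have hσmem (j) : σ j ∈ critC Δ Vf (k + 1) := by
    rw [hcritσ]
    exact Finset.mem_image_of_mem _ (Finset.mem_univ j)
  have hcoeff (j i) : a j i = cbCoeff Δ Vf k (τ i) (σ j) := by
    have h := DFunLike.congr_fun (ha i) (σ j)
    rw [MorseCancellation.morseCoboundary_single (hτmem i), hcritσ,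
      Finset.sum_image hσinj.injOn] at h
    simpa [Finsupp.finsetSum_apply, Finsupp.single_apply, hσinj.eq_iff] using h.symm
  intro i
  have hτi : τ i.succ ≠ τ0 := hτzero ▸ hτinj.ne (Fin.succ_ne_zero i)
  have hcrit : (critC Δ Vf (k + 1)).erase σ0 =
      Finset.image (fun j : Fin n => σ j.succ) Finset.univ := by
    rw [hcritσ, ← hσzero, ← Finset.image_erase hσinj]
    ext z
    simp [Fin.exists_fin_succ, Fin.succ_ne_zero]
  rw [MorseCancellation.morseCoboundary_single
      (MorseCancellation.mem_critC_cancelPair P0 (hτmem _) hτi),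
    MorseCancellation.critC_cancelPair_succ hk1, hcrit,
    Finset.sum_image (fun _ _ _ _ h => Fin.succ_injective n (hσinj h))]
  refine Finset.sum_congr rfl fun j _ => ?_
  have hσj : σ j.succ ≠ σ0 := hσzero ▸ hσinj.ne (Fin.succ_ne_zero j)
  rw [MorseCancellation.cbCoeff_cancelPair hk1 hV hσ0 hτ0 P0 hP0uniq (hτmem _) hτi (hσmem _) hσj,
    hcoeff, hcoeff, hcoeff, hcoeff, hσzero, hτzero]
end

section
/- Let Δ be a d-dimensional simplicial complex with a gradient vector field V, let (σ_0^{(k)}, τ_0^{(k−1)}) be a cancellable critical pair with unique V-trajectory P_0, and let W be the gradient vector field obtained by cancelling (σ_0, τ_0) from V. Then for any W-critical k-simplex σ_j, the sum of the weights of all W-trajectories from σ_j to σ_0 equals −w(P_0) times the sum of the weights of all V-trajectories from σ_j to τ_0: Σ_{P a W-trajectory from σ_j to σ_0} w(P) = −w(P_0) · Σ_{P a V-trajectory from σ_j to τ_0} w(P). -/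
open scoped Classical

variable {V : Type*} [LinearOrder V]

section PathSums

variable {X : Type*}

/-- The product of the entries of `M` along the steps of a path `f`. -/
def pathWeight (M : Matrix X X ℤ) {n : ℕ} (f : Fin (n + 1) → X) : ℤ :=
  ∏ i : Fin n, M (f i.castSucc) (f i.succ)

lemma path_length_le_rank {M : Matrix X X ℤ} {h : X → ℕ}
    (hM : ∀ x y, M x y ≠ 0 → h y < h x) {n : ℕ} (f : Fin (n + 1) → X)
    (hf : pathWeight M f ≠ 0) : n ≤ h (f 0) := by
  have key : ∀ i : Fin (n + 1), h (f i) + i ≤ h (f 0) := by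
    intro i
    induction i using Fin.induction with
    | zero => simp
    | succ i ih =>
      have := hM _ _ (Finset.prod_ne_zero_iff.1 hf i (Finset.mem_univ i))
      simp only [Fin.val_castSucc, Fin.val_succ] at *
      omega
  have := key (Fin.last n)
  simp only [Fin.val_last] at this
  omega

lemma exists_path_of_reflTransGen {R : X → X → Prop} {a b : X}
    (hab : Relation.ReflTransGen R a b) :
    ∃ (n : ℕ) (f : ℕ → X), f 0 = a ∧ f n = b ∧ ∀ i < n, R (f i) (f (i + 1)) := by
  induction hab using Relation.ReflTransGen.head_induction_on with
  | refl => exact ⟨0, fun _ => b, rfl, rfl, by simp⟩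
  | @head a c hac _ ih =>
    obtain ⟨n, f, h0, hn, hf⟩ := ih
    refine ⟨n + 1, fun i => Nat.casesOn i a f, rfl, hn, ?_⟩
    rintro (_ | i) hi
    · simpa [h0] using hac
    · exact hf i (by omega)

lemma exists_rank_of_acyclic [Fintype X] {R : X → X → Prop} (hR : ∀ x, ¬ Relation.TransGen R x x) :
    ∃ h : X → ℕ, ∀ x y, R x y → h y < h x := by
  refine ⟨fun x => (Finset.univ.filter fun y => Relation.TransGen R x y).card,
    fun x y hxy => Finset.card_lt_card ?_⟩
  rw [Finset.ssubset_iff_of_subset]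
  · exact ⟨y, by simpa using Relation.TransGen.single hxy, by simpa using hR y⟩
  · intro z
    simpa using fun hz => Relation.TransGen.head hxy hz

variable [Fintype X] [DecidableEq X]

lemma sum_pathWeight (M : Matrix X X ℤ) (c : X → ℤ) (n : ℕ) (s : X) :
    ∑ f : Fin (n + 1) → X, (if f 0 = s then pathWeight M f * c (f (Fin.last n)) else 0) =
      ((M ^ n).mulVec c) s := by
  induction n generalizing s with
  | zero =>
    rw [← (Equiv.funUnique (Fin 1) X).symm.sum_comp]
    simp [pathWeight]
  | succ n ih =>
    rw [pow_succ', ← Matrix.mulVec_mulVec, Matrix.mulVec, dotProduct]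
    simp_rw [← ih]
    rw [← (Fin.consEquiv fun _ : Fin (n + 2) => X).sum_comp, Fintype.sum_prod_type]
    simp only [Fin.consEquiv, Equiv.coe_fn_mk, Fin.cons_zero]
    rw [Finset.sum_eq_single s (fun b _ hb => by simp [hb]) (by simp)]
    simp_rw [Finset.mul_sum, mul_ite, mul_zero]
    rw [Finset.sum_comm]
    refine Finset.sum_congr rfl fun f _ => ?_
    rw [Finset.sum_ite_eq]
    simp [pathWeight, Fin.prod_univ_succ, ← Fin.succ_last, mul_assoc]

lemma pow_apply_rank {M : Matrix X X ℤ} {h : X → ℕ} (hM : ∀ x y, M x y ≠ 0 → h y < h x)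
    (n : ℕ) (x y : X) (hxy : (M ^ n) x y ≠ 0) : h y + n ≤ h x := by
  induction n generalizing x with
  | zero =>
    rcases eq_or_ne x y with rfl | hne
    · simp
    · simp [hne] at hxy
  | succ n ih =>
    rw [pow_succ', Matrix.mul_apply] at hxy
    obtain ⟨z, -, hz⟩ := Finset.exists_ne_zero_of_sum_ne_zero hxy
    have h1 := hM x z (left_ne_zero_of_mul hz)
    have h2 := ih z (right_ne_zero_of_mul hz)
    omega

lemma pow_eq_zero_of_rank {M : Matrix X X ℤ} {h : X → ℕ} {N : ℕ}
    (hM : ∀ x y, M x y ≠ 0 → h y < h x) (hN : ∀ x, h x < N) : M ^ N = 0 := by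
  ext x y
  by_contra hne
  have h1 := pow_apply_rank hM N x y hne
  have h2 := hN x
  omega

/-- A sum over objects encoded faithfully by weighted paths starting at `s` is computed by the
geometric series of the step matrix. -/
lemma finsum_eq_geom_mulVec {T : Type*} {M : Matrix X X ℤ} {h : X → ℕ} {N : ℕ}
    (hM : ∀ x y, M x y ≠ 0 → h y < h x) (hN : ∀ x, h x < N) (s : X) (c : X → ℤ)
    (wt : T → ℤ) (e : T → Σ n, (Fin (n + 1) → X)) (he : Function.Injective e)
    (hfirst : ∀ P, (e P).2 0 = s)
    (hwt : ∀ P, wt P = pathWeight M (e P).2 * c ((e P).2 (Fin.last _)))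
    (hsurj : ∀ (n : ℕ) (f : Fin (n + 1) → X), f 0 = s → pathWeight M f ≠ 0 →
      c (f (Fin.last n)) ≠ 0 → ∃ P, e P = ⟨n, f⟩) :
    ∑ᶠ P, wt P = ((∑ n ∈ Finset.range N, M ^ n).mulVec c) s := by
  set G : (Σ n, (Fin (n + 1) → X)) → ℤ := fun q =>
    if q.2 0 = s then pathWeight M q.2 * c (q.2 (Fin.last _)) else 0 with hG
  have hwG : ∀ P, wt P = G (e P) := fun P => by simp [hG, hfirst, hwt]
  have hsupp : Function.support G ⊆ Set.range e := by
    rintro ⟨n, f⟩ hq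
    simp only [hG, Function.mem_support, ne_eq, ite_eq_right_iff, not_forall] at hq
    obtain ⟨h0, hq⟩ := hq
    exact hsurj n f h0 (left_ne_zero_of_mul hq) (right_ne_zero_of_mul hq)
  have hsupp' : Function.support G ⊆
      ((Finset.range N).sigma fun _ => Finset.univ : Finset (Σ n, (Fin (n + 1) → X))) := by
    rintro ⟨n, f⟩ hq
    simp only [hG, Function.mem_support, ne_eq, ite_eq_right_iff, not_forall] at hq
    obtain ⟨h0, hq⟩ := hq
    have := path_length_le_rank hM f (left_ne_zero_of_mul hq)
    have := hN (f 0)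
    simp only [Finset.coe_sigma, Set.mem_sigma_iff, Finset.coe_range, Set.mem_Iio,
      Finset.coe_univ, Set.mem_univ, and_true]
    omega
  calc ∑ᶠ P, wt P = ∑ᶠ P, G (e P) := finsum_congr hwG
    _ = ∑ᶠ q ∈ Set.range e, G q := (finsum_mem_range he).symm
    _ = ∑ᶠ q, G q := by
      rw [finsum_mem_def, Set.indicator_eq_self.2 hsupp]
    _ = ∑ n ∈ Finset.range N, ((M ^ n).mulVec c) s := by
      rw [finsum_eq_sum_of_support_subset G hsupp', Finset.sum_sigma]
      exact Finset.sum_congr rfl fun n _ => sum_pathWeight M c n s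
    _ = _ := by
      rw [Matrix.sum_mulVec, Finset.sum_apply]

end PathSums

lemma incidence_sq {σ τ : Finset V} {k : ℕ} (h : τ ⊆ σ) (hσ : σ.card = k + 1)
    (hτ : τ.card = k) : incidence σ τ * incidence σ τ = 1 := by
  have h1 : (σ \ τ).card = 1 := by
    rw [Finset.card_sdiff_of_subset h]
    omega
  rw [incidence, if_pos ⟨h, h1⟩, ← mul_pow]
  simp

lemma incidence_ne_zero {σ τ : Finset V} {k : ℕ} (h : τ ⊆ σ) (hσ : σ.card = k + 1)
    (hτ : τ.card = k) : incidence σ τ ≠ 0 :=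
  left_ne_zero_of_mul (incidence_sq h hσ hτ ▸ one_ne_zero)

lemma ssubset_of_incidence_ne_zero {σ τ : Finset V} (h : incidence σ τ ≠ 0) : τ ⊂ σ := by
  rw [incidence] at h
  split_ifs at h with h1
  · refine ⟨h1.1, fun h2 => ?_⟩
    have := h1.2
    rw [Finset.sdiff_eq_empty_iff_subset.2 h2] at this
    simp at this
  · exact absurd rfl h

/-- The `k`-simplices of `Δ`. -/
abbrev Simp (Δ : SComplex V) (k : ℕ) : Type _ :=
  {σ : Finset V // σ ∈ Δ.faces.filter fun σ => σ.card = k + 1}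

/-- The pairs of `F` whose upper element is a `k`-simplex form a matching between
`(k-1)`-simplices and `k`-simplices of `Δ`. -/
structure IsMatchingAt (Δ : SComplex V) (k : ℕ) (F : Finset (Finset V × Finset V)) : Prop where
  face : ∀ {a y}, (a, y) ∈ F → y.card = k + 1 → a ∈ Δ.faces ∧ a ⊂ y ∧ a.card = k
  lower_unique : ∀ {a a' y}, (a, y) ∈ F → (a', y) ∈ F → y.card = k + 1 → a = a'
  upper_unique : ∀ {a y y'}, (a, y) ∈ F → (a, y') ∈ F → y.card = k + 1 → y'.card = k + 1 →
    y = y'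

lemma IsDVF.isMatchingAt {Δ : SComplex V} {F : Finset (Finset V × Finset V)} (hF : IsDVF Δ F)
    (k : ℕ) : IsMatchingAt Δ k F where
  face h hy := by
    obtain ⟨h1, -, h2, h3⟩ := hF.1 _ h
    exact ⟨h1, h2, by simp only at h3; omega⟩
  lower_unique {a a' y} h h' _ := by
    by_contra hne
    exact (hF.2 _ h _ h' (by simpa using hne)).2.2.2 rfl
  upper_unique {a y y'} h h' _ _ := by
    by_contra hne
    exact (hF.2 _ h _ h' (by simpa using hne)).1 rfl

/-- The matrix whose `(x, y)` entry is the weight of a one-step trajectory from `x` to `y`. -/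
noncomputable def stepMatrix (Δ : SComplex V) (k : ℕ) (F : Finset (Finset V × Finset V)) :
    Matrix (Simp Δ k) (Simp Δ k) ℤ := fun x y =>
  if x = y then 0 else
    ∑ a ∈ Δ.faces, if (a, y.1) ∈ F then -(incidence x.1 a * incidence y.1 a) else 0

section Trajectories

variable {Δ : SComplex V} {k : ℕ} {F : Finset (Finset V × Finset V)}

lemma Simp.mem_faces (x : Simp Δ k) : x.1 ∈ Δ.faces := (Finset.mem_filter.1 x.2).1

lemma Simp.card_eq (x : Simp Δ k) : x.1.card = k + 1 := (Finset.mem_filter.1 x.2).2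

lemma stepMatrix_of_mem (hF : IsMatchingAt Δ k F) {x y : Simp Δ k} {a : Finset V}
    (ha : (a, y.1) ∈ F) (hxy : x ≠ y) :
    stepMatrix Δ k F x y = -(incidence x.1 a * incidence y.1 a) := by
  rw [stepMatrix, if_neg hxy, Finset.sum_eq_single a, if_pos ha]
  · intro b _ hb
    exact if_neg fun h => hb (hF.lower_unique h ha y.card_eq)
  · exact fun h => absurd (hF.face ha y.card_eq).1 h

lemma stepMatrix_ne_zero_iff (hF : IsMatchingAt Δ k F) {x y : Simp Δ k} :
    stepMatrix Δ k F x y ≠ 0 ↔ x ≠ y ∧ ∃ a, (a, y.1) ∈ F ∧ a ⊂ x.1 := by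
  constructor
  · intro h
    have hxy : x ≠ y := by
      rintro rfl
      simp [stepMatrix] at h
    rw [stepMatrix, if_neg hxy] at h
    obtain ⟨a, -, ha⟩ := Finset.exists_ne_zero_of_sum_ne_zero h
    rw [ne_eq, ite_eq_right_iff, not_forall] at ha
    obtain ⟨ha, h2⟩ := ha
    exact ⟨hxy, a, ha, ssubset_of_incidence_ne_zero (left_ne_zero_of_mul (neg_ne_zero.1 h2))⟩
  · rintro ⟨hxy, a, ha, hax⟩
    obtain ⟨-, h2, h3⟩ := hF.face ha y.card_eq
    rw [stepMatrix_of_mem hF ha hxy]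
    exact neg_ne_zero.2 (mul_ne_zero (incidence_ne_zero hax.1 x.card_eq h3)
      (incidence_ne_zero h2.1 y.card_eq h3))

lemma one_sub_stepMatrix_of_mem (hF : IsMatchingAt Δ k F) (x : Simp Δ k) {y : Simp Δ k}
    {a : Finset V} (ha : (a, y.1) ∈ F) :
    (1 - stepMatrix Δ k F) x y = incidence x.1 a * incidence y.1 a := by
  obtain ⟨-, h2, h3⟩ := hF.face ha y.card_eq
  rcases eq_or_ne x y with rfl | hxy
  · simp [stepMatrix, incidence_sq h2.1 x.card_eq h3]
  · simp [stepMatrix_of_mem hF ha hxy, hxy]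

lemma one_sub_stepMatrix_of_forall_notMem (x : Simp Δ k) {y : Simp Δ k}
    (hy : ∀ a, (a, y.1) ∉ F) :
    (1 - stepMatrix Δ k F) x y = (1 : Matrix (Simp Δ k) (Simp Δ k) ℤ) x y := by
  simp [stepMatrix, hy]

/-- The path of upper simplices of a trajectory between `k`-simplices. -/
def Traj.path {s t : Finset V} (P : Traj Δ F k s t) : Σ n, (Fin (n + 1) → Simp Δ k) :=
  ⟨P.r, fun i => ⟨P.β i, Finset.mem_filter.2 ⟨P.βmem i, P.βcard i⟩⟩⟩

/-- The upper simplices of a trajectory from a `k`-simplex to a `(k-1)`-simplex. -/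
def TrajD.upper {s t : Finset V} (P : TrajD Δ F k s t) (i : Fin (P.r + 1)) : Simp Δ k :=
  ⟨P.β i, Finset.mem_filter.2 ⟨P.βmem i, P.βcard i⟩⟩

/-- The path of upper simplices of a trajectory from a `k`-simplex to a `(k-1)`-simplex. -/
def TrajD.path {s t : Finset V} (P : TrajD Δ F k s t) : Σ n, (Fin (n + 1) → Simp Δ k) :=
  ⟨P.r, P.upper⟩

lemma Traj.stepMatrix_path (hF : IsMatchingAt Δ k F) {s t : Finset V} (P : Traj Δ F k s t)
    (i : Fin P.r) : stepMatrix Δ k F (P.path.2 i.castSucc) (P.path.2 i.succ) =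
      -(incidence (P.β i.castSucc) (P.α i) * incidence (P.β i.succ) (P.α i)) :=
  stepMatrix_of_mem hF (x := P.path.2 i.castSucc) (y := P.path.2 i.succ) (P.vpair i)
    fun h => P.βne i (congrArg Subtype.val h).symm

lemma TrajD.stepMatrix_path (hF : IsMatchingAt Δ k F) {s t : Finset V} (P : TrajD Δ F k s t)
    (i : Fin P.r) : stepMatrix Δ k F (P.upper i.castSucc) (P.upper i.succ) =
      -(incidence (P.β i.castSucc) (P.α i.castSucc) * incidence (P.β i.succ) (P.α i.castSucc)) :=
  stepMatrix_of_mem hF (x := P.upper i.castSucc) (y := P.upper i.succ) (P.vpair i)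
    fun h => P.βne i (congrArg Subtype.val h).symm

lemma Traj.path_injective (hF : IsMatchingAt Δ k F) {s t : Finset V} :
    Function.Injective (Traj.path : Traj Δ F k s t → _) := by
  rintro ⟨r, β, α, _, _, hc, _, _, _, _, hp, _, _⟩ ⟨r', β', α', _, _, _, _, _, _, _, hp', _, _⟩ h
  obtain ⟨rfl, h⟩ := Sigma.mk.inj h
  have hβ : β = β' := funext fun i => congrArg Subtype.val (congrFun (eq_of_heq h) i)
  subst hβ
  have hα : α = α' := funext fun i => hF.lower_unique (hp i) (hp' i) (hc _)
  subst hα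
  rfl

lemma TrajD.path_injective (hF : IsMatchingAt Δ k F) {s t : Finset V} :
    Function.Injective (TrajD.path : TrajD Δ F k s t → _) := by
  rintro ⟨r, β, α, _, _, hc, _, _, hl, _, hp, _, _⟩ ⟨r', β', α', _, _, _, _, _, hl', _, hp', _, _⟩ h
  obtain ⟨rfl, h⟩ := Sigma.mk.inj h
  have hβ : β = β' := funext fun i => congrArg Subtype.val (congrFun (eq_of_heq h) i)
  subst hβ
  have hα : α = α' := by
    funext i
    induction i using Fin.lastCases with
    | last => exact hl.trans hl'.symm
    | cast i => exact hF.lower_unique (hp i) (hp' i) (hc _)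
  subst hα
  rfl

lemma pathWeight_ne_zero_iff (hF : IsMatchingAt Δ k F) {n : ℕ} {f : Fin (n + 1) → Simp Δ k} :
    pathWeight (stepMatrix Δ k F) f ≠ 0 ↔ ∀ i : Fin n, f i.castSucc ≠ f i.succ ∧
      ∃ a, (a, (f i.succ).1) ∈ F ∧ a ⊂ (f i.castSucc).1 := by
  simp only [pathWeight, Finset.prod_ne_zero_iff, stepMatrix_ne_zero_iff hF, Finset.mem_univ,
    true_implies]

lemma Traj.exists_path_eq (hF : IsMatchingAt Δ k F) {n : ℕ} (f : Fin (n + 1) → Simp Δ k)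
    (hf : pathWeight (stepMatrix Δ k F) f ≠ 0) :
    ∃ P : Traj Δ F k (f 0).1 (f (Fin.last n)).1, P.path = ⟨n, f⟩ := by
  have hf' := (pathWeight_ne_zero_iff hF).1 hf
  choose hne α hα hsub using hf'
  have hface := fun i => hF.face (hα i) (f _).card_eq
  refine ⟨⟨n, fun i => (f i).1, α, fun i => (f i).mem_faces, fun i => (hface i).1,
    fun i => (f i).card_eq, fun i => (hface i).2.2, rfl, rfl, hsub, hα, ?_,
    fun i h => hne i (Subtype.ext h.symm)⟩, rfl⟩
  intro i hi heq
  have h1 := hα ⟨i + 1, hi⟩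
  rw [heq] at h1
  refine hne ⟨i + 1, hi⟩ (Subtype.ext ?_)
  exact hF.upper_unique (hα i) h1 (f _).card_eq (f _).card_eq

lemma TrajD.exists_path_eq (hF : IsMatchingAt Δ k F) {n : ℕ} (f : Fin (n + 1) → Simp Δ k)
    (hf : pathWeight (stepMatrix Δ k F) f ≠ 0) {t : Finset V} (ht : t ∈ Δ.faces)
    (htc : t.card = k) (htF : ∀ y, (t, y) ∉ F) (hlast : t ⊂ (f (Fin.last n)).1) :
    ∃ P : TrajD Δ F k (f 0).1 t, P.path = ⟨n, f⟩ := by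
  have hf' := (pathWeight_ne_zero_iff hF).1 hf
  choose hne α hα hsub using hf'
  have hface := fun i => hF.face (hα i) (f _).card_eq
  refine ⟨⟨n, fun i => (f i).1, Fin.snoc α t, fun i => (f i).mem_faces, ?_,
    fun i => (f i).card_eq, ?_, rfl, by simp, ?_, by simpa using hα, ?_,
    fun i h => hne i (Subtype.ext h.symm)⟩, rfl⟩
  · intro i
    induction i using Fin.lastCases with
    | last => simpa using ht
    | cast i => simpa using (hface i).1
  · intro i
    induction i using Fin.lastCases with
    | last => simpa using htc
    | cast i => simpa using (hface i).2.2
  · intro i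
    induction i using Fin.lastCases with
    | last => simpa using hlast
    | cast i => simpa using hsub i
  · intro i heq
    rw [Fin.snoc_castSucc (α := fun _ => Finset V)] at heq
    rcases Nat.lt_or_ge (i + 1) n with hi | hi
    · have hi' : i.succ = (⟨i + 1, hi⟩ : Fin n).castSucc := rfl
      rw [hi', Fin.snoc_castSucc (α := fun _ => Finset V)] at heq
      have h1 := hα ⟨i + 1, hi⟩
      rw [heq] at h1
      exact hne ⟨i + 1, hi⟩ (Subtype.ext
        (hF.upper_unique (hα i) h1 (f _).card_eq (f _).card_eq))
    · have hi' : i.succ = Fin.last n := Fin.ext (by simp; omega)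
      rw [hi', Fin.snoc_last (α := fun _ => Finset V)] at heq
      exact htF _ (heq ▸ hα i)

variable {h : Simp Δ k → ℕ} {N : ℕ}

lemma finsum_wT (hF : IsMatchingAt Δ k F)
    (hM : ∀ x y, stepMatrix Δ k F x y ≠ 0 → h y < h x) (hN : ∀ x, h x < N)
    (s t : Simp Δ k) :
    ∑ᶠ P : Traj Δ F k s.1 t.1, wT P = (∑ n ∈ Finset.range N, stepMatrix Δ k F ^ n) s t := by
  rw [finsum_eq_geom_mulVec hM hN s (Pi.single t 1) wT Traj.path (Traj.path_injective hF)]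
  · simp
  · exact fun P => Subtype.ext P.first
  · intro P
    have hl : P.path.2 (Fin.last _) = t := Subtype.ext P.last
    rw [hl, Pi.single_eq_same, mul_one]
    exact Finset.prod_congr rfl fun i _ => (P.stepMatrix_path hF i).symm
  · rintro n f rfl hf hc
    obtain rfl : f (Fin.last n) = t := by
      by_contra hne
      exact hc (Pi.single_eq_of_ne hne 1)
    exact Traj.exists_path_eq hF f hf

lemma finsum_wTD (hF : IsMatchingAt Δ k F)
    (hM : ∀ x y, stepMatrix Δ k F x y ≠ 0 → h y < h x) (hN : ∀ x, h x < N)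
    (s : Simp Δ k) {t : Finset V} (ht : t ∈ Δ.faces) (htc : t.card = k)
    (htF : ∀ y, (t, y) ∉ F) :
    ∑ᶠ P : TrajD Δ F k s.1 t, wTD P =
      ((∑ n ∈ Finset.range N, stepMatrix Δ k F ^ n).mulVec fun x => incidence x.1 t) s := by
  rw [finsum_eq_geom_mulVec hM hN s (fun x => incidence x.1 t) wTD TrajD.path (TrajD.path_injective hF)]
  · exact fun P => Subtype.ext P.first
  · intro P
    have hl : (P.α (Fin.last P.r)) = t := P.last
    rw [wTD, hl]
    congr 1
    exact Finset.prod_congr rfl fun i _ => (P.stepMatrix_path hF i).symm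
  · rintro n f rfl hf hc
    exact TrajD.exists_path_eq hF f hf ht htc htF (ssubset_of_incidence_ne_zero hc)

lemma wTD_sq {s t : Finset V} (hF : IsMatchingAt Δ k F) (P : TrajD Δ F k s t) :
    wTD P * wTD P = 1 := by
  rw [wTD, mul_mul_mul_comm, ← Finset.prod_mul_distrib,
    incidence_sq (P.sub _).1 (P.βcard _) (P.αcard _), mul_one]
  refine Finset.prod_eq_one fun i _ => ?_
  rw [neg_mul_neg, mul_mul_mul_comm, incidence_sq (P.sub _).1 (P.βcard _) (P.αcard _),
    incidence_sq (hF.face (P.vpair i) (P.βcard _)).2.1.1 (P.βcard _) (P.αcard _), mul_one]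

lemma IsGVF.exists_rank (hV : IsGVF Δ F) (k : ℕ) :
    ∃ h : Simp Δ k → ℕ, ∀ x y, stepMatrix Δ k F x y ≠ 0 → h y < h x := by
  refine exists_rank_of_acyclic fun x hx => hV.2 ?_
  obtain ⟨y, hxy, hyx⟩ := Relation.TransGen.head'_iff.1 hx
  obtain ⟨n, f, h0, hn, hf⟩ := exists_path_of_reflTransGen hyx
  let g : ℕ → Simp Δ k := fun i => Nat.casesOn i x f
  have hg : ∀ i < n + 1, stepMatrix Δ k F (g i) (g (i + 1)) ≠ 0 := by
    rintro (_ | i) hi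
    · simpa [g, h0] using hxy
    · exact hf i (by omega)
  have hP := Traj.exists_path_eq (hV.1.isMatchingAt k)
    (fun i : Fin (n + 1 + 1) => g i)
    (Finset.prod_ne_zero_iff.2 fun i _ => by simpa using hg i i.2)
  have hlast : g (Fin.last (n + 1) : Fin (n + 1 + 1)) = x := hn
  rw [hlast] at hP
  obtain ⟨P, hP⟩ := hP
  have hr : P.r = n + 1 := congrArg Sigma.fst hP
  exact ⟨k, x.1, P, by omega⟩

end Trajectories

section Cancellation

variable {Δ : SComplex V} {k : ℕ} {Vf : Finset (Finset V × Finset V)} {σ0 τ0 : Finset V}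

/-- Criticality of the two endpoints, in the form in which it enters the cancellation. -/
structure IsUnmatchedPair (Vf : Finset (Finset V × Finset V)) (σ0 τ0 : Finset V) : Prop where
  upper : ∀ a, (a, σ0) ∉ Vf
  lower : ∀ y, (τ0, y) ∉ Vf

lemma notMem_of_mem_critC {c : ℕ} (hc : 2 ≤ c) {σ : Finset V} (hσ : σ ∈ critC Δ Vf c) :
    ∀ a, (a, σ) ∉ Vf := by
  obtain ⟨-, hcard, -, -, h | ⟨h, -⟩⟩ := Finset.mem_filter.1 hσ
  · exact fun a ha => (h _ ha).2 rfl
  · omega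

lemma IsUnmatchedPair.of_critC (hV : IsDVF Δ Vf) (hk : 1 ≤ k) (hσ0 : σ0 ∈ critC Δ Vf (k + 1))
    (hτ0 : τ0 ∈ critC Δ Vf k) : IsUnmatchedPair Vf σ0 τ0 where
  upper := notMem_of_mem_critC (by omega) hσ0
  lower y hy := by
    obtain ⟨-, -, -, hne, h | ⟨-, h⟩⟩ := Finset.mem_filter.1 hτ0
    · exact (h _ hy).1 rfl
    · refine (hV.2 _ hy _ h fun heq => ?_).2.1 rfl
      exact hne.ne_empty (congrArg Prod.fst heq)

lemma TrajD.stepMatrix_upper_ne_zero (hF : IsMatchingAt Δ k Vf) (P : TrajD Δ Vf k σ0 τ0)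
    (i : Fin P.r) : stepMatrix Δ k Vf (P.upper i.castSucc) (P.upper i.succ) ≠ 0 :=
  (stepMatrix_ne_zero_iff hF).2
    ⟨fun h => P.βne i (congrArg Subtype.val h).symm, _, P.vpair i, P.sub _⟩

lemma TrajD.β_injective (hV : IsGVF Δ Vf) (P : TrajD Δ Vf k σ0 τ0) :
    Function.Injective P.β := by
  obtain ⟨h, hh⟩ := hV.exists_rank k
  have hanti : StrictAnti fun i : Fin (P.r + 1) => h (P.upper i) :=
    Fin.strictAnti_iff_succ_lt.2 fun i =>
      hh _ _ (P.stepMatrix_upper_ne_zero (hV.1.isMatchingAt k) i)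
  intro i j hij
  exact hanti.injective (congrArg h (Subtype.ext hij))

lemma TrajD.α_injective (hV : IsGVF Δ Vf) (hcrit : IsUnmatchedPair Vf σ0 τ0)
    (P : TrajD Δ Vf k σ0 τ0) : Function.Injective P.α := by
  have hlast : ∀ i : Fin P.r, P.α i.castSucc ≠ P.α (Fin.last _) := fun i h =>
    hcrit.lower _ (P.last ▸ h ▸ P.vpair i)
  intro i j hij
  induction i using Fin.lastCases with
  | last =>
    induction j using Fin.lastCases with
    | last => rfl
    | cast j => exact absurd hij.symm (hlast j)
  | cast i =>
    induction j using Fin.lastCases with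
    | last => exact absurd hij (hlast i)
    | cast j =>
      have := (hV.1.isMatchingAt k).upper_unique (P.vpair i) (hij ▸ P.vpair j)
        (P.βcard _) (P.βcard _)
      rw [Fin.succ_injective _ (P.β_injective hV this)]

lemma mem_cancelPair_β_iff (hV : IsGVF Δ Vf) (hcrit : IsUnmatchedPair Vf σ0 τ0)
    (P : TrajD Δ Vf k σ0 τ0) {a : Finset V} {j : Fin (P.r + 1)} :
    (a, P.β j) ∈ cancelPair P ↔ a = P.α j := by
  simp only [cancelPair, Finset.mem_union, Finset.mem_sdiff, Finset.mem_image, Finset.mem_univ,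
    true_and, Prod.mk.injEq, not_exists, not_and]
  constructor
  · rintro (⟨h1, h2⟩ | ⟨i, rfl, hi⟩)
    · induction j using Fin.cases with
      | zero => exact absurd (P.first ▸ h1) (hcrit.upper a)
      | succ j =>
        exact absurd rfl (h2 j ((hV.1.isMatchingAt k).lower_unique (P.vpair j) h1 (P.βcard _)))
    · rw [P.β_injective hV hi]
  · rintro rfl
    exact Or.inr ⟨j, rfl, rfl⟩

lemma mem_cancelPair_iff_of_forall_ne (P : TrajD Δ Vf k σ0 τ0) {a y : Finset V}
    (hy : ∀ j, y ≠ P.β j) : (a, y) ∈ cancelPair P ↔ (a, y) ∈ Vf := by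
  simp only [cancelPair, Finset.mem_union, Finset.mem_sdiff, Finset.mem_image, Finset.mem_univ,
    true_and, Prod.mk.injEq, not_exists, not_and]
  constructor
  · rintro (h | ⟨i, -, hi⟩)
    · exact h.1
    · exact absurd hi.symm (hy i)
  · exact fun h => Or.inl ⟨h, fun i _ hi => hy _ hi.symm⟩

lemma isMatchingAt_cancelPair (hV : IsGVF Δ Vf) (hcrit : IsUnmatchedPair Vf σ0 τ0)
    (P : TrajD Δ Vf k σ0 τ0) : IsMatchingAt Δ k (cancelPair P) := by
  have hF := hV.1.isMatchingAt k
  have hmix : ∀ {j y}, (P.α j, y) ∈ Vf → y.card = k + 1 → ∃ i, y = P.β i := by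
    intro j y h hy
    induction j using Fin.lastCases with
    | last => exact absurd (P.last ▸ h) (hcrit.lower y)
    | cast j => exact ⟨j.succ, hF.upper_unique h (P.vpair j) hy (P.βcard _)⟩
  refine ⟨?_, ?_, ?_⟩
  · intro a y h hy
    by_cases hP : ∃ j, y = P.β j
    · obtain ⟨j, rfl⟩ := hP
      rw [mem_cancelPair_β_iff hV hcrit] at h
      exact h ▸ ⟨P.αmem j, P.sub j, P.αcard j⟩
    · rw [mem_cancelPair_iff_of_forall_ne P (not_exists.1 hP)] at h
      exact hF.face h hy
  · intro a a' y h h' hy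
    by_cases hP : ∃ j, y = P.β j
    · obtain ⟨j, rfl⟩ := hP
      rw [mem_cancelPair_β_iff hV hcrit] at h h'
      rw [h, h']
    · rw [mem_cancelPair_iff_of_forall_ne P (not_exists.1 hP)] at h h'
      exact hF.lower_unique h h' hy
  · intro a y y' h h' hy hy'
    by_cases hP : ∃ j, y = P.β j <;> by_cases hP' : ∃ j, y' = P.β j
    · obtain ⟨j, rfl⟩ := hP
      obtain ⟨j', rfl⟩ := hP'
      rw [mem_cancelPair_β_iff hV hcrit] at h h'
      rw [P.α_injective hV hcrit (h.symm.trans h')]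
    · obtain ⟨j, rfl⟩ := hP
      rw [mem_cancelPair_β_iff hV hcrit] at h
      rw [mem_cancelPair_iff_of_forall_ne P (not_exists.1 hP'), h] at h'
      exact absurd (hmix h' hy') hP'
    · obtain ⟨j, rfl⟩ := hP'
      rw [mem_cancelPair_β_iff hV hcrit] at h'
      rw [mem_cancelPair_iff_of_forall_ne P (not_exists.1 hP), h'] at h
      exact absurd (hmix h hy) hP
    · rw [mem_cancelPair_iff_of_forall_ne P (not_exists.1 hP)] at h
      rw [mem_cancelPair_iff_of_forall_ne P (not_exists.1 hP')] at h'
      exact hF.upper_unique h h' hy hy'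

lemma eq_of_path_to_lower (hF : IsMatchingAt Δ k Vf) (hcrit : IsUnmatchedPair Vf σ0 τ0)
    {P : TrajD Δ Vf k σ0 τ0} (huniq : ∀ Q : TrajD Δ Vf k σ0 τ0, Q = P) {n : ℕ}
    (g : ℕ → Simp Δ k) (h0 : (g 0).1 = σ0)
    (hg : ∀ i < n, stepMatrix Δ k Vf (g i) (g (i + 1)) ≠ 0) (hn : τ0 ⊂ (g n).1) :
    P.r = n ∧ ∀ i : Fin (P.r + 1), P.upper i = g i := by
  subst h0
  obtain ⟨Q, hQ⟩ := TrajD.exists_path_eq hF (fun i : Fin (n + 1) => g i)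
    (Finset.prod_ne_zero_iff.2 fun i _ => by simpa using hg i i.2)
    (P.last ▸ P.αmem _) (P.last ▸ P.αcard _) hcrit.lower hn
  change TrajD Δ Vf k (g 0).1 τ0 at Q
  rw [huniq Q] at hQ
  have key : ∀ q : Σ n, (Fin (n + 1) → Simp Δ k), q = ⟨n, fun i => g i⟩ →
      q.1 = n ∧ ∀ i, q.2 i = g i := by
    rintro _ rfl
    simp
  exact key _ hQ

lemma eq_last_of_lower_ssubset (hF : IsMatchingAt Δ k Vf) (hcrit : IsUnmatchedPair Vf σ0 τ0)
    {P : TrajD Δ Vf k σ0 τ0} (huniq : ∀ Q : TrajD Δ Vf k σ0 τ0, Q = P) {i : Fin (P.r + 1)}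
    (hi : τ0 ⊂ P.β i) : i = Fin.last _ := by
  let g : ℕ → Simp Δ k := fun m => if hm : m ≤ P.r then P.upper ⟨m, Nat.lt_succ_of_le hm⟩ else P.upper 0
  have h := eq_of_path_to_lower hF hcrit huniq (n := i) g (by simpa [g, TrajD.upper] using P.first) (by
    intro m hm
    have h1 : m < P.r := by omega
    simpa [g, h1.le, Nat.succ_le_of_lt h1] using P.stepMatrix_upper_ne_zero hF ⟨m, h1⟩)
    (by simpa [g, TrajD.upper, Nat.le_of_lt_succ i.2] using hi)
  exact Fin.ext h.1.symm

lemma eq_succ_of_reaches_lower (hF : IsMatchingAt Δ k Vf) (hcrit : IsUnmatchedPair Vf σ0 τ0)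
    {P : TrajD Δ Vf k σ0 τ0} (huniq : ∀ Q : TrajD Δ Vf k σ0 τ0, Q = P) {i : Fin (P.r + 1)}
    {y δ : Simp Δ k} (hy : stepMatrix Δ k Vf (P.upper i) y ≠ 0)
    (hyδ : Relation.ReflTransGen (fun x y => stepMatrix Δ k Vf x y ≠ 0) y δ)
    (hδ : τ0 ⊂ δ.1) : ∃ j : Fin P.r, j.castSucc = i ∧ y = P.upper j.succ := by
  obtain ⟨n, f, hf0, hfn, hf⟩ := exists_path_of_reflTransGen hyδ
  let g : ℕ → Simp Δ k := fun m =>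
    if hm : m ≤ i then P.upper ⟨m, by have := i.2; omega⟩ else f (m - (i + 1))
  obtain ⟨hr, hg⟩ := eq_of_path_to_lower hF hcrit huniq (n := i + 1 + n) g
    (by simpa [g, TrajD.upper] using P.first) (by
      intro m hm
      rcases lt_trichotomy m i with h | h | h
      · have h1 : m < P.r := by have := i.2; omega
        simpa [g, h.le, Nat.succ_le_of_lt h] using P.stepMatrix_upper_ne_zero hF ⟨m, h1⟩
      · subst h
        simpa [g, hf0] using hy
      · have h1 : m + 1 - (i + 1) = m - (i + 1) + 1 := by omega
        simpa [g, h.not_ge, show ¬ m + 1 ≤ i by omega, h1] using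
          hf (m - (i + 1)) (by omega))
    (by simpa [g, show ¬ (i : ℕ) + 1 + n ≤ i by omega, hfn] using hδ)
  have hi : (i : ℕ) < P.r := by omega
  refine ⟨⟨i, hi⟩, rfl, ?_⟩
  rw [hg]
  simp [g, hf0]

lemma reaches_lower_of_ssubset (hF : IsMatchingAt Δ k Vf)
    (P : TrajD Δ Vf k σ0 τ0) {j : Fin (P.r + 1)} {x : Simp Δ k} (hx : P.α j ⊂ x.1) :
    ∃ δ, Relation.ReflTransGen (fun x y => stepMatrix Δ k Vf x y ≠ 0) x δ ∧ τ0 ⊂ δ.1 := by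
  have hlast : τ0 ⊂ (P.upper (Fin.last _)).1 := by
    have := P.sub (Fin.last _)
    rwa [P.last] at this
  have hreach : ∀ i, Relation.ReflTransGen (fun x y => stepMatrix Δ k Vf x y ≠ 0)
      (P.upper i) (P.upper (Fin.last _)) := by
    intro i
    induction i using Fin.reverseInduction with
    | last => exact .refl
    | cast i ih => exact .head (P.stepMatrix_upper_ne_zero hF i) ih
  induction j using Fin.lastCases with
  | last => exact ⟨x, .refl, P.last ▸ hx⟩
  | cast j =>
    refine ⟨_, ?_, hlast⟩
    rcases eq_or_ne x (P.upper j.succ) with rfl | hne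
    · exact hreach j.succ
    · exact .head ((stepMatrix_ne_zero_iff hF).2 ⟨hne, _, P.vpair j, hx⟩) (hreach j.succ)

lemma exists_rank_cancelPair (hV : IsGVF Δ Vf) (hcrit : IsUnmatchedPair Vf σ0 τ0)
    {P : TrajD Δ Vf k σ0 τ0} (huniq : ∀ Q : TrajD Δ Vf k σ0 τ0, Q = P) :
    ∃ h : Simp Δ k → ℕ, ∀ x y, stepMatrix Δ k (cancelPair P) x y ≠ 0 → h y < h x := by
  have hF := hV.1.isMatchingAt k
  obtain ⟨h, hh⟩ := hV.exists_rank k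
  set Reach : Simp Δ k → Prop := fun x =>
    ∃ δ, Relation.ReflTransGen (fun x y => stepMatrix Δ k Vf x y ≠ 0) x δ ∧ τ0 ⊂ δ.1
  let m : Simp Δ k → ℕ := fun x =>
    if hx : ∃ j, x.1 = P.β j then (hx.choose : ℕ) + 1 else if Reach x then P.r + 2 else 0
  have hm_on : ∀ x j, x.1 = P.β j → m x = j + 1 := by
    intro x j hx
    have hex : ∃ j, x.1 = P.β j := ⟨j, hx⟩
    simp only [m, dif_pos hex]
    rw [P.β_injective hV (hex.choose_spec.symm.trans hx)]
  have hm_off : ∀ x, (¬ ∃ j, x.1 = P.β j) → m x = if Reach x then P.r + 2 else 0 :=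
    fun x hx => dif_neg hx
  have hlex : ∀ x y, stepMatrix Δ k (cancelPair P) x y ≠ 0 →
      m y < m x ∨ m y ≤ m x ∧ h y < h x := by
    intro x y hxy
    obtain ⟨hne, a, ha, hax⟩ :=
      (stepMatrix_ne_zero_iff (isMatchingAt_cancelPair hV hcrit P)).1 hxy
    by_cases hy : ∃ j, y.1 = P.β j
    · obtain ⟨j, hj⟩ := hy
      rw [hj, mem_cancelPair_β_iff hV hcrit] at ha
      subst ha
      left
      rw [hm_on y j hj]
      by_cases hx : ∃ i, x.1 = P.β i
      · obtain ⟨i, hi⟩ := hx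
        rw [hm_on x i hi]
        have hij : i ≠ j := by
          rintro rfl
          exact hne (Subtype.ext (hi.trans hj.symm))
        have hxi : x = P.upper i := Subtype.ext hi
        rw [hi] at hax
        induction j using Fin.lastCases with
        | last =>
          rw [P.last] at hax
          exact absurd (eq_last_of_lower_ssubset hF hcrit huniq hax) hij
        | cast j =>
          rcases eq_or_ne i j.succ with rfl | hi'
          · simp
          · exfalso
            have hstep : stepMatrix Δ k Vf (P.upper i) (P.upper j.succ) ≠ 0 :=
              (stepMatrix_ne_zero_iff hF).2
                ⟨fun h => hi' (P.β_injective hV (congrArg Subtype.val h)), _, P.vpair j, hax⟩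
            obtain ⟨δ, h1, h2⟩ := reaches_lower_of_ssubset hF P
              (x := P.upper j.succ) (P.sub j.succ)
            obtain ⟨j', hj', h3⟩ := eq_succ_of_reaches_lower hF hcrit huniq hstep h1 h2
            have h4 := Fin.succ_injective _ (P.β_injective hV (congrArg Subtype.val h3))
            exact hij (h4 ▸ hj'.symm)
      · rw [hm_off x hx, if_pos (reaches_lower_of_ssubset hF P hax)]
        have := j.2
        omega
    · rw [mem_cancelPair_iff_of_forall_ne P (not_exists.1 hy)] at ha
      have hstep := (stepMatrix_ne_zero_iff hF).2 ⟨hne, a, ha, hax⟩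
      rw [hm_off y hy]
      by_cases hx : ∃ i, x.1 = P.β i
      · obtain ⟨i, hi⟩ := hx
        left
        rw [hm_on x i hi, if_neg]
        · omega
        · rintro ⟨δ, h1, h2⟩
          have hxi : x = P.upper i := Subtype.ext hi
          obtain ⟨j, -, h3⟩ := eq_succ_of_reaches_lower hF hcrit huniq (hxi ▸ hstep) h1 h2
          exact hy ⟨_, congrArg Subtype.val h3⟩
      · refine Or.inr ⟨?_, hh _ _ hstep⟩
        rw [hm_off x hx]
        by_cases hr : Reach y
        · obtain ⟨δ, h1, h2⟩ := id hr
          have hrx : Reach x := ⟨δ, .head hstep h1, h2⟩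
          rw [if_pos hr, if_pos hrx]
        · simp [hr]
  have hN : ∀ x, h x < Finset.univ.sup h + 1 := fun x =>
    Nat.lt_succ_of_le (Finset.le_sup (Finset.mem_univ x))
  generalize Finset.univ.sup h + 1 = N at hN
  refine ⟨fun x => m x * N + h x, fun x y hxy => ?_⟩
  have hNy := hN y
  change m y * N + h y < m x * N + h x
  rcases hlex x y hxy with h1 | ⟨h1, h2⟩
  · have := Nat.mul_le_mul_right N (Nat.succ_le_of_lt h1)
    rw [Nat.succ_mul] at this
    omega
  · have := Nat.mul_le_mul_right N h1
    omega

end Cancellation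

/-- The sum of the weights of all W-trajectories from σⱼ to σ₀ equals -w(P₀) times the
sum of the weights of all V-trajectories from σⱼ to τ₀. -/
theorem statement_13 (Δ : SComplex V) (d k : ℕ)
    (hdim : ∀ σ ∈ Δ.faces, σ.card ≤ d + 1) (hdim' : ∃ σ ∈ Δ.faces, σ.card = d + 1)
    (hk1 : 1 ≤ k) (hkd : k ≤ d)
    (Vf : Finset (Finset V × Finset V)) (hV : IsGVF Δ Vf)
    (σ0 τ0 : Finset V) (hσ0 : σ0 ∈ critC Δ Vf (k + 1)) (hτ0 : τ0 ∈ critC Δ Vf k)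
    (P0 : TrajD Δ Vf k σ0 τ0) (hP0uniq : ∀ Q : TrajD Δ Vf k σ0 τ0, Q = P0)
    (σj : Finset V) (hσj : σj ∈ critC Δ (cancelPair P0) (k + 1)) :
    (∑ᶠ P : Traj Δ (cancelPair P0) k σj σ0, wT P) =
      -wTD P0 * ∑ᶠ P : TrajD Δ Vf k σj τ0, wTD P := by
  have hF := hV.1.isMatchingAt k
  have hcrit := IsUnmatchedPair.of_critC hV.1 hk1 hσ0 hτ0
  have hW := isMatchingAt_cancelPair hV hcrit P0
  obtain ⟨h, hh⟩ := hV.exists_rank k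
  obtain ⟨h', hh'⟩ := exists_rank_cancelPair hV hcrit hP0uniq
  obtain ⟨N, hN⟩ : ∃ N, ∀ x, h x < N :=
    ⟨_, fun x => Nat.lt_succ_of_le (Finset.le_sup (Finset.mem_univ x))⟩
  obtain ⟨N', hN'⟩ : ∃ N, ∀ x, h' x < N :=
    ⟨_, fun x => Nat.lt_succ_of_le (Finset.le_sup (Finset.mem_univ x))⟩
  have hmem : ∀ {F σ}, σ ∈ critC Δ F (k + 1) → σ ∈ Δ.faces.filter fun σ => σ.card = k + 1 :=
    fun hσ => Finset.mem_filter.2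
      ⟨(Finset.mem_filter.1 hσ).1, (Finset.mem_filter.1 hσ).2.1⟩
  obtain ⟨s0, hs0⟩ : ∃ s : Simp Δ k, s.1 = σ0 := ⟨⟨σ0, hmem hσ0⟩, rfl⟩
  obtain ⟨s, hs⟩ : ∃ s : Simp Δ k, s.1 = σj := ⟨⟨σj, hmem hσj⟩, rfl⟩
  have hτmem := (Finset.mem_filter.1 hτ0).1
  have hτcard := (Finset.mem_filter.1 hτ0).2.1
  set c : Simp Δ k → ℤ := fun x => incidence x.1 τ0
  have e1 := finsum_wT hW hh' hN' s s0
  have e2 := finsum_wTD hF hh hN s hτmem hτcard hcrit.lower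
  have e3 := finsum_wTD hF hh hN s0 hτmem hτcard hcrit.lower
  have hsP : ∀ j, s.1 ≠ P0.β j := by
    intro j hj
    refine notMem_of_mem_critC (by omega) hσj (P0.α j) ?_
    rw [← hs, hj]
    exact (mem_cancelPair_β_iff hV hcrit P0).2 rfl
  rw [hs0, hs] at e1
  rw [hs] at e2
  rw [hs0, @finsum_unique ℤ (TrajD Δ Vf k σ0 τ0) _ ⟨⟨P0⟩, hP0uniq⟩] at e3
  change wTD P0 = _ at e3
  rw [e1, e2]
  set G := ∑ n ∈ Finset.range N, stepMatrix Δ k Vf ^ n with hG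
  set G' := ∑ n ∈ Finset.range N', stepMatrix Δ k (cancelPair P0) ^ n with hG'
  have hAG : (1 - stepMatrix Δ k Vf) * G = 1 := by
    rw [hG, mul_neg_geom_sum, pow_eq_zero_of_rank hh hN, sub_zero]
  have hGA' : G' * (1 - stepMatrix Δ k (cancelPair P0)) = 1 := by
    rw [hG', geom_sum_mul_neg, pow_eq_zero_of_rank hh' hN', sub_zero]
  have hrow : ∀ t, ∑ x, G' s x * (1 - stepMatrix Δ k (cancelPair P0)) x t =
      (1 : Matrix (Simp Δ k) (Simp Δ k) ℤ) s t := fun t => by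
    rw [← Matrix.mul_apply, hGA']
  have hann : ∀ j, ∑ x, G' s x * incidence x.1 (P0.α j) = 0 := by
    intro j
    have h1 := hrow (P0.upper j)
    have h2 : (P0.α j, (P0.upper j).1) ∈ cancelPair P0 :=
      (mem_cancelPair_β_iff hV hcrit P0).2 rfl
    simp_rw [one_sub_stepMatrix_of_mem hW _ h2, ← mul_assoc] at h1
    rw [← Finset.sum_mul, Matrix.one_apply_ne fun h => hsP j (congrArg Subtype.val h)] at h1
    exact (mul_eq_zero.1 h1).resolve_right
      (incidence_ne_zero (P0.sub j).1 (P0.βcard j) (P0.αcard j))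
  have hrowV : Matrix.vecMul (G' s) (1 - stepMatrix Δ k Vf) =
      Pi.single s 1 + G' s s0 • Pi.single s0 1 := by
    funext t
    change ∑ x, G' s x * (1 - stepMatrix Δ k Vf) x t = _
    by_cases ht : ∃ j, t.1 = P0.β j
    · obtain ⟨j, hj⟩ := ht
      have hst : t ≠ s := fun h => hsP j (h ▸ hj)
      induction j using Fin.cases with
      | zero =>
        obtain rfl : t = s0 := Subtype.ext (by rw [hj, P0.first, hs0])
        simp_rw [one_sub_stepMatrix_of_forall_notMem (F := Vf) (y := t) _
          (by rw [hs0]; exact hcrit.upper)]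
        simp [Matrix.one_apply, hst]
      | succ j =>
        have hts : t ≠ s0 := by
          rintro rfl
          exact absurd (P0.β_injective hV ((P0.first.trans hs0.symm).trans hj)) (Fin.succ_ne_zero j).symm
        simp_rw [one_sub_stepMatrix_of_mem hF _ (hj ▸ P0.vpair j), ← mul_assoc]
        rw [← Finset.sum_mul, hann]
        simp [hst, hts]
    · have hts : t ≠ s0 := by
        rintro rfl
        exact ht ⟨0, by rw [hs0, P0.first]⟩
      have hcol : ∀ x, stepMatrix Δ k Vf x t = stepMatrix Δ k (cancelPair P0) x t := by
        intro x
        simp only [stepMatrix, mem_cancelPair_iff_of_forall_ne P0 (not_exists.1 ht)]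
      simp_rw [Matrix.sub_apply, hcol, ← Matrix.sub_apply]
      rw [hrow]
      simp [hts, Matrix.one_apply, Pi.single_apply, eq_comm]
  have hdot : G' s ⬝ᵥ c = (G.mulVec c) s + G' s s0 * (G.mulVec c) s0 := by
    calc G' s ⬝ᵥ c = G' s ⬝ᵥ ((1 - stepMatrix Δ k Vf) * G).mulVec c := by
          rw [hAG, Matrix.one_mulVec]
      _ = Matrix.vecMul (G' s) (1 - stepMatrix Δ k Vf) ⬝ᵥ G.mulVec c := by
          rw [← Matrix.mulVec_mulVec, Matrix.dotProduct_mulVec]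
      _ = _ := by
          rw [hrowV, add_dotProduct, smul_dotProduct]
          simp
  have hzero : G' s ⬝ᵥ c = 0 := by
    have := hann (Fin.last _)
    rwa [P0.last] at this
  rw [hzero, ← e3] at hdot
  linear_combination (-wTD P0) * hdot - G' s s0 * wTD_sq hF P0
end
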